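/- Let Q be a privacy protocol all of whose entries are positive and whose rank is a, and let μ be a Borel probability measure on the simplex 𝒫 having a continuous density f, with p ↦ log det D_p and p ↦ log det G_p − Σ_{y=1}^b log((Qp)_y) μ-integrable. Then liminf_{n→∞} n · MSE^freq_{μ,n}(Q,Φ_opt,n) ≥ (a/(2πe)) · e^{(2/(a−1))·δ_μ(Q)}. -/

import Mathlib

open MeasureTheory Matrix Finset Filter Real

noncomputable section

/-- The probability simplex in `ℝ^a`. -/
def simplex (a : ℕ) : Set (Fin a → ℝ) :=
  {p | (∀ x, 0 ≤ p x) ∧ ∑ x, p x = 1}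

/-- Likelihood `L_y(p) = ∏ i, (Qp)_{y i}`. -/
def lik {a b n : ℕ} (Q : Matrix (Fin b) (Fin a) ℝ) (y : Fin n → Fin b)
    (p : Fin a → ℝ) : ℝ :=
  ∏ i, Q.mulVec p (y i)

/-- Mean squared error for distribution estimation. -/
def MSEdistr {a b n : ℕ} (Q : Matrix (Fin b) (Fin a) ℝ) (μ : Measure (Fin a → ℝ))
    (Est : (Fin n → Fin b) → (Fin a → ℝ)) : ℝ :=
  ∑ y : (Fin n → Fin b), ∫ p, (∑ x, (p x - Est y x) ^ 2) * lik Q y p ∂μ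

/-- The posterior-mean estimator for distribution estimation. -/
def PiOpt {a b n : ℕ} (Q : Matrix (Fin b) (Fin a) ℝ) (μ : Measure (Fin a → ℝ))
    (y : Fin n → Fin b) : Fin a → ℝ :=
  fun x => (∫ p, p x * lik Q y p ∂μ) / (∫ p, lik Q y p ∂μ)

/-- Empirical frequency vector of a data vector. -/
def freqVec {a n : ℕ} (xv : Fin n → Fin a) : Fin a → ℝ :=
  fun α => ((Finset.univ.filter fun i => xv i = α).card : ℝ) / n

/-- Joint weight `w(x⃗,y⃗) = ∫ ∏ i, p_{x_i} Q_{y_i|x_i} dμ(p)`. -/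
def wgt {a b n : ℕ} (Q : Matrix (Fin b) (Fin a) ℝ) (μ : Measure (Fin a → ℝ))
    (xv : Fin n → Fin a) (y : Fin n → Fin b) : ℝ :=
  ∫ p, (∏ i, p (xv i) * Q (y i) (xv i)) ∂μ

/-- Mean squared error for frequency estimation. -/
def MSEfreq {a b n : ℕ} (Q : Matrix (Fin b) (Fin a) ℝ) (μ : Measure (Fin a → ℝ))
    (Est : (Fin n → Fin b) → (Fin a → ℝ)) : ℝ :=
  ∑ xv : (Fin n → Fin a), ∑ y : (Fin n → Fin b),
    wgt Q μ xv y * ∑ α, (freqVec xv α - Est y α) ^ 2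

/-- The posterior-mean estimator for frequency estimation. -/
def PhiOpt {a b n : ℕ} (Q : Matrix (Fin b) (Fin a) ℝ) (μ : Measure (Fin a → ℝ))
    (y : Fin n → Fin b) : Fin a → ℝ :=
  fun α => (∑ xv : (Fin n → Fin a), wgt Q μ xv y * freqVec xv α) /
    (∑ xv : (Fin n → Fin a), wgt Q μ xv y)

/-- `P(φ, y⃗) = ∑_{x⃗ : F(x⃗) = φ} w(x⃗, y⃗)`. -/
def Pphi {a b n : ℕ} (Q : Matrix (Fin b) (Fin a) ℝ) (μ : Measure (Fin a → ℝ))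
    (φ : Fin a → ℝ) (y : Fin n → Fin b) : ℝ := by
  classical
  exact ∑ xv ∈ Finset.univ.filter (fun xv : Fin n → Fin a => freqVec xv = φ), wgt Q μ xv y

/-- Conditional Shannon entropy `H_n(F | Y⃗)` (terms with zero probability vanish since
`Real.log 0 = 0`). -/
def HFcond {a b : ℕ} (Q : Matrix (Fin b) (Fin a) ℝ) (μ : Measure (Fin a → ℝ))
    (n : ℕ) : ℝ := by
  classical
  exact -(∑ y : (Fin n → Fin b), ∑ φ ∈ Finset.image (freqVec (a := a) (n := n)) Finset.univ,
      Pphi Q μ φ y * Real.log (Pphi Q μ φ y /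
        ∑ φ' ∈ Finset.image (freqVec (a := a) (n := n)) Finset.univ, Pphi Q μ φ' y))

/-- The set `Δ = {q ∈ ℝ^m : q ≥ 0, ∑ q ≤ 1}`. -/
def stdCorner (m : ℕ) : Set (Fin m → ℝ) :=
  {q | (∀ i, 0 ≤ q i) ∧ ∑ i, q i ≤ 1}

/-- The identification `Δ ⊂ ℝ^{a-1} → 𝒫 ⊂ ℝ^a`,
`q ↦ (q_1, …, q_{a-1}, 1 - ∑ q_i)`. -/
def emb (a : ℕ) (q : Fin (a - 1) → ℝ) : Fin a → ℝ :=
  fun x => if h : (x : ℕ) < a - 1 then q ⟨x.1, h⟩ else 1 - ∑ i, q i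

/-- `μ` has density `f` (w.r.t. Lebesgue measure on `Δ`). -/
def IsDensity {a : ℕ} (μ : Measure (Fin a → ℝ)) (f : (Fin (a - 1) → ℝ) → ℝ) : Prop :=
  Measurable f ∧ (∀ q, 0 ≤ f q) ∧ (∫ q in stdCorner (a - 1), f q) = 1 ∧
  ∀ g : (Fin a → ℝ) → ℝ, Measurable g → (∃ C, ∀ p, |g p| ≤ C) →
    (∫ p, g p ∂μ) = ∫ q in stdCorner (a - 1), g (emb a q) * f q

/-- `μ` has continuous density `f`. -/
def IsContDensity {a : ℕ} (μ : Measure (Fin a → ℝ)) (f : (Fin (a - 1) → ℝ) → ℝ) : Prop :=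
  ContinuousOn f (stdCorner (a - 1)) ∧ (∀ q, 0 ≤ f q) ∧
  (∫ q in stdCorner (a - 1), f q) = 1 ∧
  ∀ g : (Fin a → ℝ) → ℝ, Measurable g → (∃ C, ∀ p, |g p| ≤ C) →
    (∫ p, g p ∂μ) = ∫ q in stdCorner (a - 1), g (emb a q) * f q

/-- Normalisation constant `C_{y⃗} = ∫_Δ f(q) L_{y⃗}(p(q)) dλ(q)`. -/
def Cw {a b n : ℕ} (Q : Matrix (Fin b) (Fin a) ℝ) (f : (Fin (a - 1) → ℝ) → ℝ)
    (y : Fin n → Fin b) : ℝ :=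
  ∫ q in stdCorner (a - 1), f q * lik Q y (emb a q)

/-- Posterior density `g_{y⃗}(q) = f(q) L_{y⃗}(p(q)) / C_{y⃗}`. -/
def gpost {a b n : ℕ} (Q : Matrix (Fin b) (Fin a) ℝ) (f : (Fin (a - 1) → ℝ) → ℝ)
    (y : Fin n → Fin b) (q : Fin (a - 1) → ℝ) : ℝ :=
  f q * lik Q y (emb a q) / Cw Q f y

/-- Conditional differential entropy `h_n(P | Y⃗)`. -/
def hCond {a b : ℕ} (Q : Matrix (Fin b) (Fin a) ℝ) (f : (Fin (a - 1) → ℝ) → ℝ)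
    (n : ℕ) : ℝ :=
  ∑ y : (Fin n → Fin b),
    Cw Q f y * (-(∫ q in stdCorner (a - 1), gpost Q f y q * Real.log (gpost Q f y q)))

/-- The matrix `D_p = Qᵀ · diag(Qp)⁻¹ · Q`. -/
def Dmat {a b : ℕ} (Q : Matrix (Fin b) (Fin a) ℝ) (p : Fin a → ℝ) :
    Matrix (Fin a) (Fin a) ℝ :=
  Qᵀ * Matrix.diagonal (fun y => (Q.mulVec p y)⁻¹) * Q

/-- The constant `γ_μ(Q)`. -/
def gammaMu {a b : ℕ} (Q : Matrix (Fin b) (Fin a) ℝ) (μ : Measure (Fin a → ℝ)) : ℝ :=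
  (((a : ℝ) - 1) / 2) * Real.log (2 * π * Real.exp 1) -
    (1 / 2) * ∫ p, Real.log (Dmat Q p).det ∂μ

/-- The truncated column `w_x = (Q_{1|x}, …, Q_{b-1|x})`. -/
def wcol {a b : ℕ} (Q : Matrix (Fin b) (Fin a) ℝ) (x : Fin a) : Fin (b - 1) → ℝ :=
  fun y => Q ⟨y.1, lt_of_lt_of_le y.2 (Nat.sub_le b 1)⟩ x

/-- The matrix `E_x = diag(w_x) - w_x w_xᵀ`. -/
def Emat {a b : ℕ} (Q : Matrix (Fin b) (Fin a) ℝ) (x : Fin a) :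
    Matrix (Fin (b - 1)) (Fin (b - 1)) ℝ :=
  Matrix.diagonal (wcol Q x) - Matrix.vecMulVec (wcol Q x) (wcol Q x)

/-- The matrix `G_p = ∑ x, p_x E_x`. -/
def Gmat {a b : ℕ} (Q : Matrix (Fin b) (Fin a) ℝ) (p : Fin a → ℝ) :
    Matrix (Fin (b - 1)) (Fin (b - 1)) ℝ :=
  ∑ x, p x • Emat Q x

/-- The constant `δ_μ(Q)`. -/
def deltaMu {a b : ℕ} (Q : Matrix (Fin b) (Fin a) ℝ) (μ : Measure (Fin a → ℝ)) : ℝ :=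
  gammaMu Q μ +
    (1 / 2) * ∫ p, (Real.log (Gmat Q p).det - ∑ y, Real.log (Q.mulVec p y)) ∂μ

/-- `Q` satisfies `ε`-local differential privacy. -/
def SatisfiesLDP {a b : ℕ} (Q : Matrix (Fin b) (Fin a) ℝ) (ε : ℝ) : Prop :=
  ∀ x x' : Fin a, ∀ y : Fin b, Q y x' ≤ Real.exp ε * Q y x

/-! Write `V_p = D_p⁻¹ - diag(p)`. The theorem combines two lower bounds.

*`∫ tr V_p dμ` bounds the liminf from below.* This is a van Trees inequality. For a tangent vector
field `c` on the simplex and a weight `h`, apply Cauchy–Schwarz to the error `F_α - Φ` and a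
statistic additive in the letters whose correlation with any function of `y⃗` is a derivative of the
likelihood along `c`. If `c` and `h` are continuously differentiable and `h` is supported in the
simplex, the terms containing the bias of `Φ` form a divergence and integrate to zero. When `c` is
close to `-V_p e_α` and `h²` is close to the density from below, what remains is nearly
`∫ (V_p)_αα dμ`, up to an error `O(1/n)` that does not depend on `Φ`.

*`tr V_p` is bounded below by determinants.* The positive semidefinite matrix `V_p` annihilates
`𝟙`, and Sylvester's determinant identity gives
`det G_p = ∏ y, (Qp)_y * det D_p * det (V_p + p pᵀ)`. AM-GM for the eigenvalues then yields
`tr V_p ≥ a * exp ((log det G_p - ∑ y, log (Qp)_y - log det D_p) / (a - 1))`, and Jensen's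
inequality for `exp` passes to the integral over `μ`.
-/

/-! ### Rank-one updates and positive semidefinite matrices -/

section RankOneUpdate

variable {ι R : Type*} [Fintype ι] [DecidableEq ι] [CommRing R]

theorem det_one_add_vecMulVec (u v : ι → R) : (1 + vecMulVec u v).det = 1 + v ⬝ᵥ u := by
  rw [vecMulVec_eq Unit, det_one_add_replicateCol_mul_replicateRow]

/-- The congruence by `1 + 𝟙 (v - p)ᵀ` fixes `V` and carries `p pᵀ` to `v vᵀ`. -/
theorem det_add_vecMulVec_self_eq_sq_mul {V : Matrix ι ι R} (hV : V *ᵥ 1 = 0)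
    (hV' : 1 ᵥ* V = 0) {p : ι → R} (hp : ∑ i, p i = 1) (v : ι → R) :
    (V + vecMulVec v v).det = (∑ i, v i) ^ 2 * (V + vecMulVec p p).det := by
  have hp' : p ⬝ᵥ 1 = 1 := by rw [dotProduct_one, hp]
  have congruence : (1 + vecMulVec (v - p) 1) * (V + vecMulVec p p) * (1 + vecMulVec 1 (v - p))
      = V + vecMulVec v v := by
    have left : (1 + vecMulVec (v - p) 1) * (V + vecMulVec p p) = V + vecMulVec v p := by
      rw [add_mul, one_mul, vecMulVec_mul, Matrix.vecMul_add, hV', vecMul_vecMulVec,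
        dotProduct_comm, hp', one_smul, zero_add, sub_vecMulVec]
      abel
    rw [left, mul_add, mul_one, mul_vecMulVec, Matrix.add_mulVec, hV, vecMulVec_mulVec, hp',
      MulOpposite.op_one, one_smul, zero_add, vecMulVec_sub]
    abel
  rw [← congruence, det_mul, det_mul, det_one_add_vecMulVec, det_one_add_vecMulVec,
    dotProduct_comm _ 1, one_dotProduct]
  simp only [Pi.sub_apply, sum_sub_distrib, hp]
  ring

theorem det_submatrix_castSucc_eq_det_add_vecMulVec {m : ℕ}
    {V : Matrix (Fin (m + 1)) (Fin (m + 1)) R} (hV : V *ᵥ 1 = 0) (hV' : 1 ᵥ* V = 0)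
    {p : Fin (m + 1) → R} (hp : ∑ i, p i = 1) :
    (V.submatrix Fin.castSucc Fin.castSucc).det = (V + vecMulVec p p).det := by
  set e : Fin (m + 1) → R := Pi.single (Fin.last m) 1
  have det_V : V.det = 0 := by
    simpa using det_add_vecMulVec_self_eq_sq_mul hV hV' hp 0
  have update : V + vecMulVec e e = V.updateRow (Fin.last m) (V (Fin.last m) + e) := by
    ext i j
    obtain rfl | hi := eq_or_ne i (Fin.last m)
    · simp [e, vecMulVec_apply]
    · simp [e, vecMulVec_apply, hi]
  have det_update : (V + vecMulVec e e).det = (V.submatrix Fin.castSucc Fin.castSucc).det := by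
    rw [update, det_updateRow_add, updateRow_eq_self, det_V, zero_add, ← adjugate_apply,
      adjugate_fin_succ_eq_det_submatrix]
    simp [Fin.succAbove_last, ← two_mul]
  rw [← det_update, det_add_vecMulVec_self_eq_sq_mul hV hV' hp e]
  simp [e]

theorem dotProduct_inv_mulVec_eq_two_mul_sub_add {D : Matrix ι ι R} (hD : Dᵀ = D)
    (hdet : IsUnit D.det) (w z : ι → R) :
    z ⬝ᵥ D⁻¹ *ᵥ z
      = 2 * (w ⬝ᵥ z) - w ⬝ᵥ D *ᵥ w + (w - D⁻¹ *ᵥ z) ⬝ᵥ D *ᵥ (w - D⁻¹ *ᵥ z) := by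
  have cancel : D *ᵥ D⁻¹ *ᵥ z = z := by rw [mulVec_mulVec, mul_nonsing_inv _ hdet, one_mulVec]
  have symm : (D⁻¹ *ᵥ z) ⬝ᵥ D *ᵥ w = w ⬝ᵥ z := by
    rw [dotProduct_mulVec, ← mulVec_transpose, hD, cancel, dotProduct_comm]
  rw [mulVec_sub, dotProduct_sub, sub_dotProduct, sub_dotProduct, cancel, symm,
    dotProduct_comm (D⁻¹ *ᵥ z) z]
  ring

end RankOneUpdate

section PosSemidef

variable {ι : Type*} [Fintype ι]

theorem one_vecMul_eq_zero_of_posSemidef {V : Matrix ι ι ℝ} (hV : V.PosSemidef)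
    (h1 : V *ᵥ 1 = 0) : 1 ᵥ* V = 0 := by
  rw [← mulVec_transpose, ← conjTranspose_eq_transpose_of_trivial, hV.isHermitian.eq, h1]

variable [DecidableEq ι]

theorem det_le_trace_div_card_pow [Nonempty ι] {V : Matrix ι ι ℝ} (hV : V.PosSemidef) :
    V.det ≤ (V.trace / Fintype.card ι) ^ Fintype.card ι := by
  have hdet : V.det = ∏ i, hV.isHermitian.eigenvalues i := by
    simpa using hV.isHermitian.det_eq_prod_eigenvalues
  have htrace : V.trace = ∑ i, hV.isHermitian.eigenvalues i := by
    simpa using hV.isHermitian.trace_eq_sum_eigenvalues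
  have amgm := Real.geom_mean_le_arith_mean univ (fun _ => (1 : ℝ)) hV.isHermitian.eigenvalues
    (by simp) (by simp [Fintype.card_pos]) (fun i _ => hV.eigenvalues_nonneg i)
  simp only [Real.rpow_one, one_mul, sum_const, card_univ, nsmul_eq_mul, mul_one, ← hdet,
    ← htrace] at amgm
  calc V.det = (V.det ^ ((Fintype.card ι : ℝ)⁻¹)) ^ Fintype.card ι :=
        (Real.rpow_inv_natCast_pow hV.det_nonneg Fintype.card_ne_zero).symm
    _ ≤ _ := pow_le_pow_left₀ (Real.rpow_nonneg hV.det_nonneg _) amgm _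

/-- AM-GM for the eigenvalues of `V + t 𝟙𝟙ᵀ`, with the optimal `t = tr V / (a (a - 1))` where `a`
is the dimension. -/
theorem card_mul_det_add_vecMulVec_le [Nontrivial ι] {V : Matrix ι ι ℝ} (hV : V.PosSemidef)
    (h1 : V *ᵥ 1 = 0) {p : ι → ℝ} (hp : ∑ i, p i = 1) :
    Fintype.card ι * (V + vecMulVec p p).det
      ≤ (V.trace / ((Fintype.card ι : ℝ) - 1)) ^ (Fintype.card ι - 1) := by
  obtain ⟨m, hm⟩ : ∃ m, Fintype.card ι = m + 1 :=
    ⟨_, (Nat.sub_add_cancel Fintype.card_pos).symm⟩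
  have hm0 : 0 < m := by have := Fintype.one_lt_card (α := ι); omega
  obtain hT | hT := hV.trace_nonneg.eq_or_lt'
  · rw [hV.trace_eq_zero_iff.1 hT]
    simp [det_vecMulVec, hm, hm0.ne']
  set t := V.trace / ((m + 1) * m) with ht
  have ht0 : 0 < t := by positivity
  have hpsd : (V + vecMulVec (fun _ => √t) (fun _ => √t)).PosSemidef :=
    hV.add (by simpa using posSemidef_vecMulVec_self_star (fun _ : ι => √t))
  have htrace : (V + vecMulVec (fun _ => √t) (fun _ => √t)).trace = V.trace + (m + 1) * t := by
    simp [Matrix.trace, vecMulVec_apply, Real.mul_self_sqrt ht0.le, sum_add_distrib, hm]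
  have hle := det_le_trace_div_card_pow hpsd
  rw [det_add_vecMulVec_self_eq_sq_mul h1 (one_vecMul_eq_zero_of_posSemidef hV h1) hp,
    htrace] at hle
  simp only [sum_const, card_univ, nsmul_eq_mul, mul_pow, Real.sq_sqrt ht0.le, hm,
    Nat.cast_add, Nat.cast_one] at hle ⊢
  rw [add_sub_cancel_right, Nat.add_sub_cancel]
  have hmean : (V.trace + (m + 1) * t) / (m + 1) = V.trace / m := by rw [ht]; field_simp
  rw [hmean, pow_succ] at hle
  refine le_of_mul_le_mul_right (le_of_eq_of_le ?_ hle) (by positivity : 0 < V.trace / m)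
  rw [ht]
  field_simp

theorem inv_succ_le_div_succ_pow (m : ℕ) :
    ((m : ℝ) + 1)⁻¹ ≤ ((m : ℝ) / (m + 1)) ^ m := by
  have hle : (-2 : ℝ) ≤ -((m : ℝ) + 1)⁻¹ := by
    rw [neg_le_neg_iff]
    exact (inv_le_one_of_one_le₀ (by linarith [m.cast_nonneg (α := ℝ)])).trans one_le_two
  calc ((m : ℝ) + 1)⁻¹ = 1 + m * -((m : ℝ) + 1)⁻¹ := by field_simp; ring
    _ ≤ (1 + -((m : ℝ) + 1)⁻¹) ^ m := one_add_mul_le_pow hle m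
    _ = _ := by congr 1; field_simp; ring

theorem card_mul_exp_log_det_le_trace [Nontrivial ι] {V : Matrix ι ι ℝ} (hV : V.PosSemidef)
    (h1 : V *ᵥ 1 = 0) {p : ι → ℝ} (hp : ∑ i, p i = 1) (hdet : 0 < (V + vecMulVec p p).det) :
    Fintype.card ι * exp (log (V + vecMulVec p p).det / ((Fintype.card ι : ℝ) - 1))
      ≤ V.trace := by
  have hle := card_mul_det_add_vecMulVec_le hV h1 hp
  have hT := hV.trace_nonneg
  obtain ⟨m, hm⟩ : ∃ m, Fintype.card ι = m + 1 :=
    ⟨_, (Nat.sub_add_cancel Fintype.card_pos).symm⟩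
  have hm0 : 0 < m := by have := Fintype.one_lt_card (α := ι); omega
  simp only [hm, Nat.cast_add, Nat.cast_one, add_sub_cancel_right, Nat.add_sub_cancel] at hle ⊢
  set w := (V + vecMulVec p p).det
  have hpow : w ≤ (V.trace / (m + 1)) ^ m := by
    calc w = ((m + 1) * w) * ((m : ℝ) + 1)⁻¹ := by field_simp
      _ ≤ (V.trace / m) ^ m * ((m : ℝ) / (m + 1)) ^ m :=
          mul_le_mul hle (inv_succ_le_div_succ_pow m) (by positivity) (by positivity)
      _ = _ := by rw [← mul_pow]; congr 1; field_simp
  have hbase : 0 < V.trace / (m + 1) := by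
    refine lt_of_le_of_ne (by positivity) fun h => ?_
    rw [← h, zero_pow hm0.ne'] at hpow
    exact hdet.not_ge hpow
  rw [mul_comm, ← le_div_iff₀ (by positivity), ← Real.le_log_iff_exp_le hbase,
    div_le_iff₀' (by positivity), ← Real.log_pow]
  exact Real.log_le_log hdet hpow

/-- Cauchy–Schwarz for the sub-probability weights `w`. -/
theorem posDef_diagonal_sub_vecMulVec {w : ι → ℝ} (hw : ∀ i, 0 < w i) (hsum : ∑ i, w i < 1) :
    (diagonal w - vecMulVec w w).PosDef := by
  refine PosDef.of_dotProduct_mulVec_pos ?_ fun z hz => ?_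
  · rw [IsHermitian, conjTranspose_eq_transpose_of_trivial, transpose_sub, diagonal_transpose,
      transpose_vecMulVec]
  have form : star z ⬝ᵥ (diagonal w - vecMulVec w w) *ᵥ z
      = ∑ i, w i * z i ^ 2 - (∑ i, w i * z i) ^ 2 := by
    rw [sub_mulVec, dotProduct_sub, star_trivial, vecMulVec_mulVec]
    simp only [dotProduct, mulVec_diagonal, Pi.smul_apply, MulOpposite.smul_eq_mul_unop,
      MulOpposite.unop_op, ← mul_assoc, ← sum_mul]
    rw [sq]
    congr 1
    · exact sum_congr rfl fun i _ => by ring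
    · congr 1; exact sum_congr rfl fun i _ => by ring
  have cauchy : (∑ i, w i * z i) ^ 2 ≤ (∑ i, w i) * ∑ i, w i * z i ^ 2 :=
    sum_sq_le_sum_mul_sum_of_sq_le_mul univ (fun i _ => (hw i).le)
      (fun i _ => mul_nonneg (hw i).le (sq_nonneg _)) (fun i _ => le_of_eq (by ring))
  have pos : 0 < ∑ i, w i * z i ^ 2 := by
    obtain ⟨i, hi⟩ := Function.ne_iff.1 hz
    exact sum_pos' (fun i _ => mul_nonneg (hw i).le (sq_nonneg _))
      ⟨i, mem_univ i, mul_pos (hw i) (sq_pos_of_ne_zero hi)⟩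
  rw [form]
  nlinarith

end PosSemidef

/-! ### The matrices `D_p`, `G_p` and `V_p` -/

section ProtocolMatrices

variable {a b : ℕ} {Q : Matrix (Fin b) (Fin a) ℝ} {p : Fin a → ℝ}

theorem exists_ne_zero_of_mem_simplex (hp : p ∈ simplex a) : ∃ x, p x ≠ 0 := by
  obtain ⟨x, -, hx⟩ := exists_ne_zero_of_sum_ne_zero (hp.2.trans_ne one_ne_zero)
  exact ⟨x, hx⟩

theorem mulVec_pos_of_mem_simplex (hQpos : ∀ y x, 0 < Q y x) (hp : p ∈ simplex a) (y : Fin b) :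
    0 < (Q *ᵥ p) y := by
  obtain ⟨x, hx⟩ := exists_ne_zero_of_mem_simplex hp
  exact sum_pos' (fun x _ => mul_nonneg (hQpos y x).le (hp.1 x))
    ⟨x, mem_univ x, mul_pos (hQpos y x) ((hp.1 x).lt_of_ne' hx)⟩

theorem sum_mulVec_eq_sum (hQcol : ∀ x, ∑ y, Q y x = 1) (p : Fin a → ℝ) :
    ∑ y, (Q *ᵥ p) y = ∑ x, p x := by
  simp only [mulVec, dotProduct]
  rw [sum_comm]
  simp only [← sum_mul, hQcol, one_mul]

theorem mulVec_injective_of_rank_eq (hrank : Q.rank = a) : Function.Injective Q.mulVec := by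
  rw [mulVec_injective_iff, linearIndependent_iff_card_eq_finrank_span, Fintype.card_fin]
  exact hrank.symm.trans Q.rank_eq_finrank_span_cols

theorem transpose_Dmat (Q : Matrix (Fin b) (Fin a) ℝ) (p : Fin a → ℝ) :
    (Dmat Q p)ᵀ = Dmat Q p := by
  simp [Dmat, Matrix.mul_assoc]

theorem dotProduct_Dmat_mulVec (Q : Matrix (Fin b) (Fin a) ℝ) (p w z : Fin a → ℝ) :
    w ⬝ᵥ Dmat Q p *ᵥ z = ∑ y, (Q *ᵥ w) y * (Q *ᵥ z) y / (Q *ᵥ p) y := by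
  rw [Dmat, ← mulVec_mulVec, ← mulVec_mulVec, dotProduct_mulVec, vecMul_transpose]
  refine sum_congr rfl fun y _ => ?_
  rw [mulVec_diagonal]
  ring

theorem posDef_Dmat (hr : ∀ y, 0 < (Q *ᵥ p) y) (hinj : Function.Injective Q.mulVec) :
    (Dmat Q p).PosDef := by
  have := (posDef_diagonal_iff.2 fun y => inv_pos.2 (hr y)).conjTranspose_mul_mul_same hinj
  rwa [conjTranspose_eq_transpose_of_trivial] at this

theorem isUnit_det_Dmat (hr : ∀ y, 0 < (Q *ᵥ p) y) (hinj : Function.Injective Q.mulVec) :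
    IsUnit (Dmat Q p).det :=
  (posDef_Dmat hr hinj).det_pos.ne'.isUnit

theorem Dmat_mulVec_self (hQcol : ∀ x, ∑ y, Q y x = 1) (hr : ∀ y, (Q *ᵥ p) y ≠ 0) :
    Dmat Q p *ᵥ p = 1 := by
  have hdiag : diagonal (fun y => ((Q *ᵥ p) y)⁻¹) *ᵥ Q *ᵥ p = 1 := by
    funext y
    rw [mulVec_diagonal, inv_mul_cancel₀ (hr y), Pi.one_apply]
  rw [Dmat, ← mulVec_mulVec, ← mulVec_mulVec, hdiag]
  funext x
  rw [mulVec, dotProduct_one, Pi.one_apply, ← hQcol x]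
  rfl

theorem inv_Dmat_mulVec_one (hQcol : ∀ x, ∑ y, Q y x = 1) (hr : ∀ y, (Q *ᵥ p) y ≠ 0)
    (hdet : IsUnit (Dmat Q p).det) : (Dmat Q p)⁻¹ *ᵥ 1 = p := by
  rw [← Dmat_mulVec_self hQcol hr, mulVec_mulVec, nonsing_inv_mul _ hdet, one_mulVec]

/-- Cauchy–Schwarz in each output symbol: `∑ y, E[z(X); Y = y]² / P(Y = y) ≤ E[z(X)²]`. -/
theorem dotProduct_Dmat_mulVec_mul_le (hQ : ∀ y x, 0 ≤ Q y x) (hQcol : ∀ x, ∑ y, Q y x = 1)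
    (hp : ∀ x, 0 ≤ p x) (z : Fin a → ℝ) :
    (p * z) ⬝ᵥ Dmat Q p *ᵥ (p * z) ≤ ∑ x, p x * z x ^ 2 := by
  rw [dotProduct_Dmat_mulVec]
  have hw : ∀ y x, 0 ≤ Q y x * p x := fun y x => mul_nonneg (hQ y x) (hp x)
  have hQp y : 0 ≤ (Q *ᵥ p) y := Finset.sum_nonneg (s := univ) fun x _ => hw y x
  have cauchy y : (Q *ᵥ (p * z)) y ^ 2 ≤ (Q *ᵥ p) y * ∑ x, Q y x * p x * z x ^ 2 :=
    sum_sq_le_sum_mul_sum_of_sq_le_mul univ (fun x _ => hw y x)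
      (fun x _ => mul_nonneg (hw y x) (sq_nonneg _))
      (fun x _ => le_of_eq (by rw [Pi.mul_apply]; ring))
  calc ∑ y, (Q *ᵥ (p * z)) y * (Q *ᵥ (p * z)) y / (Q *ᵥ p) y
      ≤ ∑ y, ∑ x, Q y x * p x * z x ^ 2 :=
        sum_le_sum fun y _ => div_le_of_le_mul₀ (hQp y)
          (sum_nonneg fun x _ => mul_nonneg (hw y x) (sq_nonneg _))
          (by rw [← sq]; exact (cauchy y).trans_eq (mul_comm _ _))
    _ = ∑ x, p x * z x ^ 2 := by
        rw [sum_comm]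
        simp only [mul_assoc, ← sum_mul, hQcol, one_mul]

/-- The matrix `V_p = D_p⁻¹ - diag(p)`: the smallest possible asymptotic covariance of
`√n (F - Φ)` when the data distribution is `p`. -/
def asympCov (Q : Matrix (Fin b) (Fin a) ℝ) (p : Fin a → ℝ) : Matrix (Fin a) (Fin a) ℝ :=
  (Dmat Q p)⁻¹ - diagonal p

theorem transpose_asympCov (Q : Matrix (Fin b) (Fin a) ℝ) (p : Fin a → ℝ) :
    (asympCov Q p)ᵀ = asympCov Q p := by
  rw [asympCov, transpose_sub, transpose_nonsing_inv, transpose_Dmat, diagonal_transpose]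

theorem asympCov_mulVec_one (hQcol : ∀ x, ∑ y, Q y x = 1) (hr : ∀ y, (Q *ᵥ p) y ≠ 0)
    (hdet : IsUnit (Dmat Q p).det) : asympCov Q p *ᵥ 1 = 0 := by
  have hdiag : diagonal p *ᵥ 1 = p := by
    funext x
    rw [mulVec_diagonal, Pi.one_apply, mul_one]
  rw [asympCov, sub_mulVec, inv_Dmat_mulVec_one hQcol hr hdet, hdiag, sub_self]

theorem posSemidef_asympCov (hQ : ∀ y x, 0 ≤ Q y x) (hQcol : ∀ x, ∑ y, Q y x = 1)
    (hp : ∀ x, 0 ≤ p x) (hr : ∀ y, 0 < (Q *ᵥ p) y) (hinj : Function.Injective Q.mulVec) :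
    (asympCov Q p).PosSemidef := by
  refine PosSemidef.of_dotProduct_mulVec_nonneg ?_ fun z => ?_
  · rw [IsHermitian, conjTranspose_eq_transpose_of_trivial, transpose_asympCov]
  have hsq := (posDef_Dmat hr hinj).posSemidef.dotProduct_mulVec_nonneg
    (p * z - (Dmat Q p)⁻¹ *ᵥ z)
  have hcs := dotProduct_Dmat_mulVec_mul_le hQ hQcol hp z
  have hpz : (p * z) ⬝ᵥ z = ∑ x, p x * z x ^ 2 :=
    sum_congr rfl fun x _ => by rw [Pi.mul_apply]; ring
  have hdiag : z ⬝ᵥ diagonal p *ᵥ z = ∑ x, p x * z x ^ 2 :=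
    sum_congr rfl fun x _ => by rw [mulVec_diagonal]; ring
  rw [star_trivial] at hsq ⊢
  rw [asympCov, sub_mulVec, dotProduct_sub, hdiag, dotProduct_inv_mulVec_eq_two_mul_sub_add
    (transpose_Dmat Q p) (isUnit_det_Dmat hr hinj) (p * z) z, hpz]
  linarith

/-- The matrix `diag(Qp) - Q diag(p) Qᵀ`: the covariance of the indicator vector of the output
given the input, averaged over the input. It extends `G_p` to all `b` output symbols. -/
def condOutputCov (Q : Matrix (Fin b) (Fin a) ℝ) (p : Fin a → ℝ) : Matrix (Fin b) (Fin b) ℝ :=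
  diagonal (Q *ᵥ p) - Q * diagonal p * Qᵀ

theorem condOutputCov_apply (Q : Matrix (Fin b) (Fin a) ℝ) (p : Fin a → ℝ) (i j : Fin b) :
    condOutputCov Q p i j = ∑ x, p x * (diagonal (Q · x) i j - Q i x * Q j x) := by
  rw [condOutputCov, Matrix.sub_apply, mul_apply]
  simp only [mul_diagonal, transpose_apply, mul_sub, sum_sub_distrib]
  congr 1
  · obtain rfl | h := eq_or_ne i j
    · simp [mulVec, dotProduct, mul_comm]
    · simp [h]
  · exact sum_congr rfl fun x _ => by ring

theorem transpose_condOutputCov (Q : Matrix (Fin b) (Fin a) ℝ) (p : Fin a → ℝ) :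
    (condOutputCov Q p)ᵀ = condOutputCov Q p := by
  simp [condOutputCov, Matrix.mul_assoc]

theorem condOutputCov_mulVec_one (hQcol : ∀ x, ∑ y, Q y x = 1) (p : Fin a → ℝ) :
    condOutputCov Q p *ᵥ 1 = 0 := by
  have hQ1 : Qᵀ *ᵥ 1 = 1 := by
    funext x
    rw [mulVec, dotProduct_one, Pi.one_apply, ← hQcol x]
    rfl
  have hdiag {k : ℕ} (v : Fin k → ℝ) : diagonal v *ᵥ 1 = v := by
    funext x
    rw [mulVec_diagonal, Pi.one_apply, mul_one]
  rw [condOutputCov, sub_mulVec, ← mulVec_mulVec, ← mulVec_mulVec, hQ1, hdiag, hdiag, sub_self]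

theorem Gmat_eq_submatrix_condOutputCov {m : ℕ} (Q : Matrix (Fin (m + 1)) (Fin a) ℝ)
    (p : Fin a → ℝ) : Gmat Q p = (condOutputCov Q p).submatrix Fin.castSucc Fin.castSucc := by
  ext i j
  simp only [submatrix_apply, condOutputCov_apply, Gmat, Matrix.sum_apply, Matrix.smul_apply,
    Emat, Matrix.sub_apply, vecMulVec_apply, smul_eq_mul, diagonal_apply, Fin.castSucc_inj]
  rfl

theorem det_Gmat_eq_det_condOutputCov_add (hQcol : ∀ x, ∑ y, Q y x = 1) (hp : ∑ x, p x = 1) :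
    (Gmat Q p).det = (condOutputCov Q p + vecMulVec (Q *ᵥ p) (Q *ᵥ p)).det := by
  have hsum : ∑ y, (Q *ᵥ p) y = 1 := (sum_mulVec_eq_sum hQcol p).trans hp
  obtain _ | m := b
  · simp at hsum
  have hright := condOutputCov_mulVec_one hQcol p
  have hleft : 1 ᵥ* condOutputCov Q p = 0 := by
    rw [← mulVec_transpose, transpose_condOutputCov, hright]
  rw [Gmat_eq_submatrix_condOutputCov]
  exact det_submatrix_castSucc_eq_det_add_vecMulVec hright hleft hsum

/-- Sylvester's identity `det (1 - A B) = det (1 - B A)`, applied after rank-one terms have been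
added: `V_p` and `condOutputCov Q p` are both singular. -/
theorem det_Gmat_eq_mul_det_asympCov_add (hQcol : ∀ x, ∑ y, Q y x = 1) (hp : ∑ x, p x = 1)
    (hr : ∀ y, (Q *ᵥ p) y ≠ 0) (hdet : IsUnit (Dmat Q p).det) :
    (Gmat Q p).det = (∏ y, (Q *ᵥ p) y) * (Dmat Q p).det *
      (asympCov Q p + vecMulVec p p).det := by
  set R := diagonal fun y => ((Q *ᵥ p) y)⁻¹ with hR
  set C := diagonal p - vecMulVec p p with hC
  have factor_output : condOutputCov Q p + vecMulVec (Q *ᵥ p) (Q *ᵥ p)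
      = diagonal (Q *ᵥ p) * (1 - R * Q * C * Qᵀ) := by
    have hR1 : diagonal (Q *ᵥ p) * R = 1 := by
      rw [hR, diagonal_mul_diagonal, ← diagonal_one]
      exact congrArg diagonal (funext fun y => mul_inv_cancel₀ (hr y))
    have hv : vecMulVec (Q *ᵥ p) (Q *ᵥ p) = Q * vecMulVec p p * Qᵀ := by
      rw [mul_vecMulVec, vecMulVec_mul, vecMul_transpose]
    rw [mul_sub, mul_one, ← Matrix.mul_assoc, ← Matrix.mul_assoc, ← Matrix.mul_assoc, hR1,
      Matrix.one_mul, hC, Matrix.mul_sub, Matrix.sub_mul, ← hv, condOutputCov]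
    abel
  have factor_input : 1 - Qᵀ * (R * Q * C) = Dmat Q p * (asympCov Q p + vecMulVec p p) := by
    rw [asympCov, mul_add, mul_sub, mul_nonsing_inv _ hdet, hC]
    simp only [Dmat, Matrix.mul_sub, Matrix.mul_assoc, hR]
    abel
  rw [det_Gmat_eq_det_condOutputCov_add hQcol hp, factor_output, det_mul, det_diagonal,
    det_one_sub_mul_comm, factor_input, det_mul, mul_assoc]

theorem posDef_Emat (hQpos : ∀ y x, 0 < Q y x) (hQcol : ∀ x, ∑ y, Q y x = 1) (x : Fin a) :
    (Emat Q x).PosDef := by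
  refine posDef_diagonal_sub_vecMulVec (fun y => hQpos _ x) ?_
  have hcol := hQcol x
  obtain _ | m := b
  · simp at hcol
  rw [Fin.sum_univ_castSucc] at hcol
  exact (lt_add_of_pos_right _ (hQpos (Fin.last m) x)).trans_eq hcol

theorem posDef_Gmat (hQpos : ∀ y x, 0 < Q y x) (hQcol : ∀ x, ∑ y, Q y x = 1)
    (hp : p ∈ simplex a) : (Gmat Q p).PosDef := by
  have hsupp : Gmat Q p = ∑ x with p x ≠ 0, p x • Emat Q x :=
    (sum_filter_of_ne fun x _ hx => left_ne_zero_of_smul hx).symm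
  obtain ⟨x, hx⟩ := exists_ne_zero_of_mem_simplex hp
  rw [hsupp]
  refine posDef_sum ⟨x, by simpa using hx⟩ fun x hx => ?_
  exact (posDef_Emat hQpos hQcol x).smul ((hp.1 x).lt_of_ne' (by simpa using hx))

theorem card_mul_exp_le_trace_asympCov (ha : 2 ≤ a) (hQpos : ∀ y x, 0 < Q y x)
    (hQcol : ∀ x, ∑ y, Q y x = 1) (hrank : Q.rank = a) (hp : p ∈ simplex a) :
    a * exp ((log (Gmat Q p).det - ∑ y, log ((Q *ᵥ p) y) - log (Dmat Q p).det) / ((a : ℝ) - 1))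
      ≤ (asympCov Q p).trace := by
  have := Fin.nontrivial_iff_two_le.2 ha
  have hr := mulVec_pos_of_mem_simplex hQpos hp
  have hr' y := (hr y).ne'
  have hinj := mulVec_injective_of_rank_eq hrank
  have hD := (posDef_Dmat hr hinj).det_pos
  have hprod : 0 < ∏ y, (Q *ᵥ p) y := prod_pos fun y _ => hr y
  have hG := (posDef_Gmat hQpos hQcol hp).det_pos
  rw [det_Gmat_eq_mul_det_asympCov_add hQcol hp.2 hr' hD.ne'.isUnit] at hG ⊢
  have hV := (mul_pos_iff_of_pos_left (mul_pos hprod hD)).1 hG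
  rw [log_mul (mul_pos hprod hD).ne' hV.ne', log_mul hprod.ne' hD.ne',
    log_prod fun y _ => hr' y, add_assoc, add_sub_cancel_left, add_sub_cancel_left]
  simpa using card_mul_exp_log_det_le_trace
    (posSemidef_asympCov (fun y x => (hQpos y x).le) hQcol hp.1 hr hinj)
    (asympCov_mulVec_one hQcol hr' hD.ne'.isUnit) hp.2 hV

end ProtocolMatrices

/-! ### Moments of additive statistics -/

section ProductWeights

variable {κ τ R : Type*} [Fintype κ] [DecidableEq κ] [Fintype τ] [CommSemiring R]

theorem sum_prod_mul_apply_mul_apply (k : κ → τ → R) (c d : τ → R) (i j : κ) :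
    ∑ z : κ → τ, (∏ l, k l (z l)) * (c (z i) * d (z j))
      = ∏ l, ∑ t, k l t * ((if l = i then c t else 1) * if l = j then d t else 1) := by
  rw [prod_univ_sum, Fintype.piFinset_univ]
  simp only [prod_mul_distrib, prod_ite_eq', mem_univ, if_true]

theorem sum_prod_mul_sum_apply (k c : κ → τ → R) :
    ∑ z : κ → τ, (∏ l, k l (z l)) * ∑ i, c i (z i)
      = ∑ i, (∏ l ∈ univ.erase i, ∑ t, k l t) * ∑ t, k i t * c i t := by
  simp only [mul_sum univ (fun i => c i _)]
  rw [sum_comm]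
  refine sum_congr rfl fun i _ => ?_
  have h := sum_prod_mul_apply_mul_apply k (c i) (fun _ => 1) i i
  simp only [mul_one, ite_self] at h
  rw [h, ← prod_erase_mul univ _ (mem_univ i)]
  congr 1
  · refine prod_congr rfl fun l hl => sum_congr rfl fun t _ => ?_
    rw [if_neg (ne_of_mem_erase hl), mul_one]
  · simp only [if_true]

theorem sum_prod_mul_sum_mul_sum {ρ : τ → R} (hρ : ∑ t, ρ t = 1) (c : τ → R) {d : τ → R}
    (hd : ∑ t, ρ t * d t = 0) :
    ∑ z : κ → τ, (∏ l, ρ (z l)) * ((∑ i, c (z i)) * ∑ j, d (z j))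
      = Fintype.card κ * ∑ t, ρ t * (c t * d t) := by
  have cross i j : ∑ z : κ → τ, (∏ l, ρ (z l)) * (c (z i) * d (z j))
      = if i = j then ∑ t, ρ t * (c t * d t) else 0 := by
    rw [sum_prod_mul_apply_mul_apply]
    split_ifs with hij
    · subst hij
      rw [prod_eq_single i (fun l _ hl => by simp [hl, hρ]) (by simp)]
      simp only [if_true]
    · refine prod_eq_zero (mem_univ j) ?_
      simp [Ne.symm hij, hd]
  calc ∑ z : κ → τ, (∏ l, ρ (z l)) * ((∑ i, c (z i)) * ∑ j, d (z j))
      = ∑ i, ∑ j, ∑ z : κ → τ, (∏ l, ρ (z l)) * (c (z i) * d (z j)) := by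
        simp only [sum_mul_sum]
        simp only [mul_sum]
        rw [sum_comm]
        exact sum_congr rfl fun i _ => sum_comm
    _ = _ := by simp [cross]

end ProductWeights

section JointMean

variable {a b n : ℕ} {Q : Matrix (Fin b) (Fin a) ℝ} {p : Fin a → ℝ}

/-- The expectation of `g(x⃗, y⃗)` when the `x_i` are independent with distribution `p` and
`y_i` is the output of the protocol `Q` on `x_i`. -/
def jointMean (Q : Matrix (Fin b) (Fin a) ℝ) (p : Fin a → ℝ)
    (g : (Fin n → Fin a) → (Fin n → Fin b) → ℝ) : ℝ :=
  ∑ xv : Fin n → Fin a, ∑ y : Fin n → Fin b, (∏ i, p (xv i) * Q (y i) (xv i)) * g xv y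

theorem jointMean_mono (hQ : ∀ y x, 0 ≤ Q y x) (hp : ∀ x, 0 ≤ p x)
    {g g' : (Fin n → Fin a) → (Fin n → Fin b) → ℝ} (h : ∀ xv y, g xv y ≤ g' xv y) :
    jointMean Q p g ≤ jointMean Q p g' :=
  sum_le_sum fun xv _ => sum_le_sum fun y _ => mul_le_mul_of_nonneg_left (h xv y)
    (prod_nonneg fun _ _ => mul_nonneg (hp _) (hQ _ _))

theorem jointMean_add (g g' : (Fin n → Fin a) → (Fin n → Fin b) → ℝ) :
    jointMean Q p (fun xv y => g xv y + g' xv y) = jointMean Q p g + jointMean Q p g' := by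
  simp only [jointMean, mul_add, sum_add_distrib]

theorem jointMean_const_mul (t : ℝ) (g : (Fin n → Fin a) → (Fin n → Fin b) → ℝ) :
    jointMean Q p (fun xv y => t * g xv y) = t * jointMean Q p g := by
  simp only [jointMean, mul_sum, mul_left_comm]

theorem jointMean_eq_sum_pairs (g : (Fin n → Fin a) → (Fin n → Fin b) → ℝ) :
    jointMean Q p g = ∑ z : Fin n → Fin a × Fin b,
      (∏ i, p (z i).1 * Q (z i).2 (z i).1) * g (fun i => (z i).1) (fun i => (z i).2) := by
  rw [jointMean, ← Fintype.sum_prod_type']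
  exact (Fintype.sum_equiv (Equiv.arrowProdEquivProdArrow (Fin n) (fun _ => Fin a)
    (fun _ => Fin b)) _ _ fun _ => rfl).symm

theorem sum_pairs_eq_one (hQcol : ∀ x, ∑ y, Q y x = 1) (hp : ∑ x, p x = 1) :
    ∑ t : Fin a × Fin b, p t.1 * Q t.2 t.1 = 1 := by
  rw [Fintype.sum_prod_type]
  simp only [← mul_sum, hQcol, mul_one, hp]

theorem jointMean_const (hQcol : ∀ x, ∑ y, Q y x = 1) (hp : ∑ x, p x = 1) (t : ℝ) :
    jointMean Q p (fun (_ : Fin n → Fin a) _ => t) = t := by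
  rw [jointMean_eq_sum_pairs, ← sum_mul, ← Fintype.piFinset_univ,
    ← prod_univ_sum (fun _ => univ) fun _ (t : Fin a × Fin b) => p t.1 * Q t.2 t.1]
  simp [sum_pairs_eq_one hQcol hp]

theorem jointMean_sum (hQcol : ∀ x, ∑ y, Q y x = 1) (hp : ∑ x, p x = 1)
    (c : Fin a → Fin b → ℝ) :
    jointMean Q p (fun (xv : Fin n → Fin a) y => ∑ i, c (xv i) (y i))
      = n * ∑ x, ∑ y, p x * Q y x * c x y := by
  rw [jointMean_eq_sum_pairs, ← Fintype.sum_prod_type']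
  refine (sum_prod_mul_sum_apply (fun _ (t : Fin a × Fin b) => p t.1 * Q t.2 t.1)
    fun _ t => c t.1 t.2).trans ?_
  simp [sum_pairs_eq_one hQcol hp]

theorem jointMean_sum_mul_sum (hQcol : ∀ x, ∑ y, Q y x = 1) (hp : ∑ x, p x = 1)
    (c : Fin a → Fin b → ℝ) {d : Fin a → Fin b → ℝ}
    (hd : ∑ x, ∑ y, p x * Q y x * d x y = 0) :
    jointMean Q p (fun (xv : Fin n → Fin a) y => (∑ i, c (xv i) (y i)) * ∑ i, d (xv i) (y i))
      = n * ∑ x, ∑ y, p x * Q y x * (c x y * d x y) := by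
  rw [jointMean_eq_sum_pairs, ← Fintype.sum_prod_type']
  rw [← Fintype.sum_prod_type'] at hd
  simpa only [Fintype.card_fin] using sum_prod_mul_sum_mul_sum (κ := Fin n)
    (sum_pairs_eq_one hQcol hp) (fun t => c t.1 t.2) hd

theorem jointMean_output (Ψ : (Fin n → Fin b) → ℝ) :
    jointMean Q p (fun _ y => Ψ y) = ∑ y, Ψ y * lik Q y p := by
  rw [jointMean, sum_comm]
  refine sum_congr rfl fun y _ => ?_
  rw [← sum_mul, mul_comm, lik]
  simp only [mulVec, dotProduct, mul_comm (Q _ _)]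
  rw [prod_univ_sum, Fintype.piFinset_univ]

theorem jointMean_output_mul_sum (Ψ : (Fin n → Fin b) → ℝ) (c : Fin a → Fin b → ℝ) :
    jointMean Q p (fun xv y => Ψ y * ∑ i, c (xv i) (y i))
      = ∑ y, Ψ y * ∑ i, (∏ j ∈ univ.erase i, (Q *ᵥ p) (y j)) *
          ∑ x, p x * Q (y i) x * c x (y i) := by
  rw [jointMean, sum_comm]
  refine sum_congr rfl fun y _ => ?_
  simp only [mul_left_comm _ (Ψ y), ← mul_sum]
  rw [sum_prod_mul_sum_apply (fun i x => p x * Q (y i) x) fun i x => c x (y i)]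
  simp only [mulVec, dotProduct, mul_comm (Q _ _)]

theorem sum_sum_mul_output (g : Fin b → ℝ) :
    ∑ x, ∑ y, p x * Q y x * g y = ∑ y, (Q *ᵥ p) y * g y := by
  rw [sum_comm]
  refine sum_congr rfl fun y _ => ?_
  rw [← sum_mul]
  simp only [mulVec, dotProduct, mul_comm (Q _ _)]

theorem sum_sum_mul_single (hQcol : ∀ x, ∑ y, Q y x = 1) (α : Fin a) :
    ∑ x, ∑ y, p x * Q y x * (Pi.single α 1 : Fin a → ℝ) x = p α := by
  rw [sum_eq_single α (fun x _ hx => by simp [hx]) (by simp)]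
  simp [← mul_sum, hQcol]

end JointMean

/-! ### The risk at a fixed distribution -/

section FreqRisk

variable {a b n : ℕ} {Q : Matrix (Fin b) (Fin a) ℝ} {p : Fin a → ℝ}

/-- The mean squared error at `p` of `Φ` as an estimator of the frequency of `α`. -/
def freqRisk (Q : Matrix (Fin b) (Fin a) ℝ) (p : Fin a → ℝ) (α : Fin a)
    (Φ : (Fin n → Fin b) → ℝ) : ℝ :=
  jointMean Q p fun xv y => (freqVec xv α - Φ y) ^ 2

theorem freqVec_eq_sum_single_div (xv : Fin n → Fin a) (α : Fin a) :
    freqVec xv α = (∑ i, (Pi.single α 1 : Fin a → ℝ) (xv i)) / n := by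
  simp [freqVec, Pi.single_apply]

theorem hasFDerivAt_lik (Q : Matrix (Fin b) (Fin a) ℝ) (y : Fin n → Fin b) (p : Fin a → ℝ) :
    HasFDerivAt (lik Q y) (∑ i, (∏ j ∈ univ.erase i, (Q *ᵥ p) (y j)) •
      (ContinuousLinearMap.proj (y i)).comp Q.mulVecLin.toContinuousLinearMap) p :=
  HasFDerivAt.finsetProd fun i _ =>
    ((ContinuousLinearMap.proj (y i)).comp Q.mulVecLin.toContinuousLinearMap).hasFDerivAt

theorem fderiv_lik_apply (Q : Matrix (Fin b) (Fin a) ℝ) (y : Fin n → Fin b) (p u : Fin a → ℝ) :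
    fderiv ℝ (lik Q y) p u = ∑ i, (∏ j ∈ univ.erase i, (Q *ᵥ p) (y j)) * (Q *ᵥ u) (y i) := by
  rw [(hasFDerivAt_lik Q y p).fderiv]
  simp

theorem mul_freqRisk_of_unbiased (hQcol : ∀ x, ∑ y, Q y x = 1) (hp : ∑ x, p x = 1) (hn : n ≠ 0)
    {α : Fin a} {B : Fin b → ℝ} (hB : ∀ x, ∑ y, Q y x * B y = (Pi.single α 1 : Fin a → ℝ) x) :
    n * freqRisk Q p α (fun y : Fin n → Fin b => (∑ i, B (y i)) / n)
      = ∑ x, ∑ y, p x * Q y x * ((Pi.single α 1 : Fin a → ℝ) x - B y) ^ 2 := by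
  set c : Fin a → Fin b → ℝ := fun x y => (Pi.single α 1 : Fin a → ℝ) x - B y with hc
  have centred : ∑ x, ∑ y, p x * Q y x * c x y = 0 := by
    refine sum_eq_zero fun x _ => ?_
    simp only [hc, mul_assoc, ← mul_sum, mul_sub, sum_sub_distrib, hB, ← sum_mul, hQcol,
      one_mul, sub_self]
  have err (xv : Fin n → Fin a) (y : Fin n → Fin b) :
      (freqVec xv α - (∑ i, B (y i)) / n) ^ 2
        = ((n : ℝ) ^ 2)⁻¹ * ((∑ i, c (xv i) (y i)) * ∑ i, c (xv i) (y i)) := by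
    rw [freqVec_eq_sum_single_div, ← sub_div, ← sum_sub_distrib, div_pow]
    ring
  have hn' : (n : ℝ) ≠ 0 := Nat.cast_ne_zero.2 hn
  simp only [freqRisk, err]
  rw [jointMean_const_mul, jointMean_sum_mul_sum hQcol hp c centred]
  simp only [← sq]
  field_simp
  rfl

/-- The ratio `s(y) = (Q (p_α e_α - u))_y / (Qp)_y`. Summing `1[xᵢ = α] - s(yᵢ)` over `i` gives a
statistic whose correlation with any function of `y⃗` is a derivative of the likelihood in the
direction `u`; this is the test statistic of the van Trees inequality below. -/
def tiltedRatio (Q : Matrix (Fin b) (Fin a) ℝ) (p : Fin a → ℝ) (α : Fin a) (u : Fin a → ℝ)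
    (y : Fin b) : ℝ :=
  (Q *ᵥ (Pi.single α (p α) - u)) y / (Q *ᵥ p) y

theorem sum_sum_mul_tiltedRatio (hQcol : ∀ x, ∑ y, Q y x = 1) (hr : ∀ y, (Q *ᵥ p) y ≠ 0)
    (α : Fin a) {u : Fin a → ℝ} (hu : ∑ x, u x = 0) :
    ∑ x, ∑ y, p x * Q y x * tiltedRatio Q p α u y = p α := by
  rw [sum_sum_mul_output]
  simp only [tiltedRatio, mul_div_cancel₀ _ (hr _), sum_mulVec_eq_sum hQcol, Pi.sub_apply,
    sum_sub_distrib, hu, sub_zero, sum_pi_single', mem_univ, if_true]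

theorem sum_sum_mul_single_sq_sub_tiltedRatio_sq (hQcol : ∀ x, ∑ y, Q y x = 1)
    (hr : ∀ y, (Q *ᵥ p) y ≠ 0) (α : Fin a) (u : Fin a → ℝ) :
    ∑ x, ∑ y, p x * Q y x * (((Pi.single α 1 : Fin a → ℝ) x + tiltedRatio Q p α u y) *
        ((Pi.single α 1 : Fin a → ℝ) x - tiltedRatio Q p α u y))
      = p α - (Pi.single α (p α) - u) ⬝ᵥ Dmat Q p *ᵥ (Pi.single α (p α) - u) := by
  have split x y : p x * Q y x * (((Pi.single α 1 : Fin a → ℝ) x + tiltedRatio Q p α u y) *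
        ((Pi.single α 1 : Fin a → ℝ) x - tiltedRatio Q p α u y))
      = p x * Q y x * (Pi.single α 1 : Fin a → ℝ) x - p x * Q y x * tiltedRatio Q p α u y ^ 2 := by
    obtain rfl | hx := eq_or_ne x α
    · rw [Pi.single_eq_same]; ring
    · rw [Pi.single_eq_of_ne hx]; ring
  simp only [split, sum_sub_distrib]
  rw [sum_sum_mul_single hQcol, sum_sum_mul_output (fun y => tiltedRatio Q p α u y ^ 2),
    dotProduct_Dmat_mulVec]
  refine congrArg _ (sum_congr rfl fun y _ => ?_)
  have := hr y
  rw [tiltedRatio]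
  field_simp

theorem jointMean_output_mul_sum_single_sub_tiltedRatio (hr : ∀ y, (Q *ᵥ p) y ≠ 0) (α : Fin a)
    (u : Fin a → ℝ) (Ψ : (Fin n → Fin b) → ℝ) :
    jointMean Q p (fun xv y => Ψ y *
        ∑ i, ((Pi.single α 1 : Fin a → ℝ) (xv i) - tiltedRatio Q p α u (y i)))
      = ∑ y, Ψ y * fderiv ℝ (lik Q y) p u := by
  have score y : ∑ x, p x * Q y x * ((Pi.single α 1 : Fin a → ℝ) x - tiltedRatio Q p α u y)
      = (Q *ᵥ u) y := by
    have hpQ : ∑ x, p x * Q y x = (Q *ᵥ p) y := by simp only [mulVec, dotProduct, mul_comm]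
    simp only [mul_sub, sum_sub_distrib, ← sum_mul, hpQ, tiltedRatio, mul_div_cancel₀ _ (hr y)]
    simp [mulVec_sub, Pi.single_apply, mul_comm]
  rw [jointMean_output_mul_sum Ψ fun x y =>
    (Pi.single α 1 : Fin a → ℝ) x - tiltedRatio Q p α u y]
  simp only [score, fderiv_lik_apply]

/-- With `X = ∑ᵢ 1[xᵢ = α]` and `Y = ∑ᵢ s(yᵢ)`, this is `2 A B ≤ A² + B²` for the error
`A = h √n (X / n - Φ)` and the additive statistic `B = (h (X - Y) + ρ) / √n`. -/
theorem le_mul_freqRisk (hQ : ∀ y x, 0 ≤ Q y x) (hQcol : ∀ x, ∑ y, Q y x = 1)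
    (hp : p ∈ simplex a) (hr : ∀ y, (Q *ᵥ p) y ≠ 0) (hn : n ≠ 0) {α : Fin a} {u : Fin a → ℝ}
    (hu : ∑ x, u x = 0) (h ρ : ℝ) (Φ : (Fin n → Fin b) → ℝ) :
    h ^ 2 * (p α - (Pi.single α (p α) - u) ⬝ᵥ Dmat Q p *ᵥ (Pi.single α (p α) - u))
        + 2 * (h * ρ * p α) - ρ ^ 2 / n
        - 2 * (h ^ 2 * ∑ y, Φ y * fderiv ℝ (lik Q y) p u + h * ρ * ∑ y, Φ y * lik Q y p)
      ≤ n * (h ^ 2 * freqRisk Q p α Φ) := by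
  set ind : Fin a → ℝ := Pi.single α 1 with hind
  set s := tiltedRatio Q p α u
  have : (0 : ℝ) < n := by positivity
  have centred : ∑ x, ∑ y, p x * Q y x * (ind x - s y) = 0 := by
    simp only [mul_sub, sum_sub_distrib]
    rw [sum_sum_mul_single hQcol, sum_sum_mul_tiltedRatio hQcol hr α hu, sub_self]
  have pointwise (xv : Fin n → Fin a) (y : Fin n → Fin b) :
      h ^ 2 / n * ((∑ i, (ind (xv i) + s (y i))) * ∑ i, (ind (xv i) - s (y i)))
          + (2 * h * ρ / n * ∑ i, s (y i)
            + ((-2 * h ^ 2) * (Φ y * ∑ i, (ind (xv i) - s (y i)))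
              + (-2 * h * ρ * Φ y + -(ρ ^ 2 / n))))
        ≤ n * h ^ 2 * (freqVec xv α - Φ y) ^ 2 := by
    rw [freqVec_eq_sum_single_div, ← hind, sum_add_distrib, sum_sub_distrib]
    generalize ∑ i, ind (xv i) = X, ∑ i, s (y i) = Y
    refine sub_nonneg.1 ((by positivity :
      0 ≤ (n * h * (X / n - Φ y) - (h * (X - Y) + ρ)) ^ 2 / n).trans_eq ?_)
    field_simp
    ring
  have key := jointMean_mono hQ hp.1 pointwise
  simp only [jointMean_add, jointMean_const_mul] at key
  rw [jointMean_sum_mul_sum hQcol hp.2 (fun x y => ind x + s y) centred,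
    jointMean_sum hQcol hp.2 (fun _ y => s y), sum_sum_mul_tiltedRatio hQcol hr α hu,
    sum_sum_mul_single_sq_sub_tiltedRatio_sq hQcol hr,
    jointMean_output_mul_sum_single_sub_tiltedRatio hr α u,
    jointMean_output Φ, jointMean_const hQcol hp.2] at key
  rw [freqRisk]
  refine le_of_eq_of_le ?_ (key.trans_eq (by ring))
  field_simp
  ring

end FreqRisk

/-! ### The Bayes risk -/

section BayesRisk

variable {a b n : ℕ} {Q : Matrix (Fin b) (Fin a) ℝ} {μ : Measure (Fin a → ℝ)}

theorem isCompact_simplex (a : ℕ) : IsCompact (simplex a) :=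
  isCompact_stdSimplex ℝ (Fin a)

theorem integrable_of_continuousOn_simplex [IsFiniteMeasure μ] (hμ : ∀ᵐ p ∂μ, p ∈ simplex a)
    {g : (Fin a → ℝ) → ℝ} (hg : ContinuousOn g (simplex a)) : Integrable g μ := by
  rw [← Measure.restrict_eq_self_of_ae_mem hμ]
  exact hg.integrableOn_compact (isCompact_simplex a)

theorem continuous_prod_mul_const (Q : Matrix (Fin b) (Fin a) ℝ) (xv : Fin n → Fin a)
    (y : Fin n → Fin b) : Continuous fun p : Fin a → ℝ => ∏ i, p (xv i) * Q (y i) (xv i) := by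
  fun_prop

theorem continuous_freqRisk (Q : Matrix (Fin b) (Fin a) ℝ) (α : Fin a)
    (Φ : (Fin n → Fin b) → ℝ) : Continuous fun p => freqRisk Q p α Φ := by
  unfold freqRisk jointMean
  fun_prop

theorem freqRisk_nonneg (hQ : ∀ y x, 0 ≤ Q y x) {p : Fin a → ℝ} (hp : ∀ x, 0 ≤ p x) (α : Fin a)
    (Φ : (Fin n → Fin b) → ℝ) : 0 ≤ freqRisk Q p α Φ :=
  sum_nonneg fun _ _ => sum_nonneg fun _ _ =>
    mul_nonneg (prod_nonneg fun _ _ => mul_nonneg (hp _) (hQ _ _)) (sq_nonneg _)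

theorem MSEfreq_eq_sum_integral_freqRisk [IsFiniteMeasure μ] (hμ : ∀ᵐ p ∂μ, p ∈ simplex a)
    (Est : (Fin n → Fin b) → Fin a → ℝ) :
    MSEfreq Q μ Est = ∑ α, ∫ p, freqRisk Q p α (fun y => Est y α) ∂μ := by
  have hi (xv : Fin n → Fin a) (y : Fin n → Fin b) (t : ℝ) :
      Integrable (fun p => (∏ i, p (xv i) * Q (y i) (xv i)) * t) μ :=
    (integrable_of_continuousOn_simplex hμ
      (continuous_prod_mul_const Q xv y).continuousOn).mul_const t
  have hα α : ∫ p, freqRisk Q p α (fun y => Est y α) ∂μ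
      = ∑ xv, ∑ y, wgt Q μ xv y * (freqVec xv α - Est y α) ^ 2 := by
    simp only [freqRisk, jointMean]
    rw [integral_finsetSum _ fun xv _ => integrable_finsetSum _ fun y _ => hi xv y _]
    refine sum_congr rfl fun xv _ => ?_
    rw [integral_finsetSum _ fun y _ => hi xv y _]
    simp only [integral_mul_const, wgt]
  simp only [hα, MSEfreq, mul_sum]
  exact (sum_congr rfl fun xv _ => sum_comm).trans sum_comm

theorem sum_mul_sub_weighted_mean_sq_le {ι : Type*} [Fintype ι] {w : ι → ℝ} (hw : ∀ i, 0 ≤ w i)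
    (F : ι → ℝ) (t : ℝ) :
    ∑ i, w i * (F i - (∑ i, w i * F i) / ∑ i, w i) ^ 2 ≤ ∑ i, w i * (F i - t) ^ 2 := by
  obtain h0 | h0 := (sum_nonneg fun i (_ : i ∈ univ) => hw i).eq_or_lt
  · have hz i : w i = 0 := (sum_eq_zero_iff_of_nonneg fun i _ => hw i).1 h0.symm i (mem_univ i)
    simp [hz]
  have expand (s : ℝ) : ∑ i, w i * (F i - s) ^ 2
      = ∑ i, w i * F i ^ 2 - 2 * s * ∑ i, w i * F i + s ^ 2 * ∑ i, w i := by
    simp only [mul_sum, ← sum_sub_distrib, ← sum_add_distrib]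
    exact sum_congr rfl fun i _ => by ring
  rw [expand, expand]
  generalize ∑ i, w i = W at *
  generalize ∑ i, w i * F i = M
  refine sub_nonneg.1 ((by positivity : 0 ≤ W * (t - M / W) ^ 2).trans_eq ?_)
  field_simp
  ring

theorem MSEfreq_PhiOpt_le (hQ : ∀ y x, 0 ≤ Q y x) (hμ : ∀ᵐ p ∂μ, p ∈ simplex a)
    (Est : (Fin n → Fin b) → Fin a → ℝ) :
    MSEfreq (n := n) Q μ (PhiOpt Q μ) ≤ MSEfreq Q μ Est := by
  have hw (xv : Fin n → Fin a) (y : Fin n → Fin b) : 0 ≤ wgt Q μ xv y := by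
    refine integral_nonneg_of_ae ?_
    filter_upwards [hμ] with p hp
    exact prod_nonneg fun i _ => mul_nonneg (hp.1 _) (hQ _ _)
  have swap (Est : (Fin n → Fin b) → Fin a → ℝ) : MSEfreq Q μ Est
      = ∑ y, ∑ α, ∑ xv, wgt Q μ xv y * (freqVec xv α - Est y α) ^ 2 := by
    simp only [MSEfreq, mul_sum]
    rw [sum_comm]
    exact sum_congr rfl fun y _ => sum_comm
  rw [swap, swap]
  exact sum_le_sum fun y _ => sum_le_sum fun α _ =>
    sum_mul_sub_weighted_mean_sq_le (fun xv => hw xv y) (fun xv => freqVec xv α) (Est y α)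

/-- Any left inverse of `Q` yields an unbiased estimator of risk `O(1/n)`. -/
theorem exists_mul_MSEfreq_PhiOpt_le [IsFiniteMeasure μ] (hQ : ∀ y x, 0 ≤ Q y x)
    (hQcol : ∀ x, ∑ y, Q y x = 1) (hinj : Function.Injective Q.mulVec)
    (hμ : ∀ᵐ p ∂μ, p ∈ simplex a) :
    ∃ C : ℝ, ∀ n : ℕ, n ≠ 0 → n * MSEfreq (n := n) Q μ (PhiOpt Q μ) ≤ C := by
  obtain ⟨g, hg⟩ := Q.mulVecLin.exists_leftInverse_of_injective (LinearMap.ker_eq_bot.2 hinj)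
  set B := LinearMap.toMatrix' g
  have hB : B * Q = 1 := by
    rw [← LinearMap.toMatrix'_toLin' Q, toLin'_apply', ← LinearMap.toMatrix'_comp, hg,
      LinearMap.toMatrix'_id]
  have unbiased α x : ∑ y, Q y x * B α y = (Pi.single α 1 : Fin a → ℝ) x := by
    have := congrFun (congrFun hB α) x
    rw [mul_apply, one_apply] at this
    simp only [mul_comm (Q _ x), this, Pi.single_apply, eq_comm]
  refine ⟨∑ α, ∫ p, ∑ x, ∑ y, p x * Q y x * ((Pi.single α 1 : Fin a → ℝ) x - B α y) ^ 2 ∂μ,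
    fun n hn => ?_⟩
  calc n * MSEfreq (n := n) Q μ (PhiOpt Q μ)
      ≤ n * MSEfreq Q μ (fun (y : Fin n → Fin b) α => (∑ i, B α (y i)) / n) :=
        mul_le_mul_of_nonneg_left (MSEfreq_PhiOpt_le hQ hμ _) n.cast_nonneg
    _ = _ := by
        rw [MSEfreq_eq_sum_integral_freqRisk hμ, mul_sum]
        refine sum_congr rfl fun α _ => ?_
        rw [← integral_const_mul]
        refine integral_congr_ae ?_
        filter_upwards [hμ] with p hp
        exact mul_freqRisk_of_unbiased hQcol hp.2 hn (unbiased α)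

end BayesRisk

/-! ### Coordinates on the simplex -/

section Coordinates

theorem isClosed_stdCorner (m : ℕ) : IsClosed (stdCorner m) := by
  have : stdCorner m = (⋂ i, {q | 0 ≤ q i}) ∩ {q | ∑ i, q i ≤ 1} := by ext; simp [stdCorner]
  rw [this]
  exact (isClosed_iInter fun i => isClosed_le continuous_const (continuous_apply i)).inter
    (isClosed_le (by fun_prop) continuous_const)

theorem isCompact_stdCorner (m : ℕ) : IsCompact (stdCorner m) :=
  isCompact_Icc.of_isClosed_subset (isClosed_stdCorner m) fun q hq =>
    (⟨hq.1, fun i => (single_le_sum (fun j _ => hq.1 j) (mem_univ i)).trans hq.2⟩ :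
      q ∈ Set.Icc 0 1)

theorem convex_stdCorner (m : ℕ) : Convex ℝ (stdCorner m) := by
  intro x hx y hy s t hs ht hst
  refine ⟨fun i => add_nonneg (mul_nonneg hs (hx.1 i)) (mul_nonneg ht (hy.1 i)), ?_⟩
  simp only [Pi.add_apply, Pi.smul_apply, smul_eq_mul, sum_add_distrib, ← mul_sum]
  nlinarith [hx.2, hy.2]

/-- The differential of `emb a`, which identifies `ℝ^{a-1}` with the vectors of sum zero in
`ℝ^a`. -/
def embTangent (a : ℕ) : (Fin (a - 1) → ℝ) →L[ℝ] (Fin a → ℝ) :=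
  ContinuousLinearMap.pi fun x =>
    if h : (x : ℕ) < a - 1 then ContinuousLinearMap.proj ⟨x.1, h⟩
    else -∑ i, ContinuousLinearMap.proj i

variable {a : ℕ}

theorem emb_eq_embTangent_add (q : Fin (a - 1) → ℝ) : emb a q = embTangent a q + emb a 0 := by
  ext x
  simp only [emb, embTangent, Pi.add_apply, ContinuousLinearMap.pi_apply]
  split_ifs
  · simp
  · simp [sub_eq_neg_add]

theorem hasFDerivAt_emb (q : Fin (a - 1) → ℝ) : HasFDerivAt (emb a) (embTangent a) q := by
  rw [funext (emb_eq_embTangent_add (a := a))]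
  exact (embTangent a).hasFDerivAt.add_const _

theorem contDiff_emb : ContDiff ℝ 1 (emb a) := by
  rw [funext (emb_eq_embTangent_add (a := a))]
  exact (embTangent a).contDiff.add contDiff_const

theorem sum_emb (ha : 0 < a) (q : Fin (a - 1) → ℝ) : ∑ x, emb a q x = 1 := by
  obtain ⟨m, rfl⟩ := Nat.exists_eq_add_one.2 ha
  rw [Fin.sum_univ_castSucc]
  simp [emb]

theorem sum_embTangent (ha : 0 < a) (c : Fin (a - 1) → ℝ) : ∑ x, embTangent a c x = 0 := by
  have h := sum_emb ha c
  rw [emb_eq_embTangent_add] at h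
  simpa [sum_add_distrib, sum_emb ha] using h

theorem exists_embTangent_eq (ha : 0 < a) {u : Fin a → ℝ} (hu : ∑ x, u x = 0) :
    ∃ c, embTangent a c = u := by
  obtain ⟨m, rfl⟩ := Nat.exists_eq_add_one.2 ha
  refine ⟨fun i => u i.castSucc, funext fun x => ?_⟩
  rw [Fin.sum_univ_castSucc] at hu
  induction x using Fin.lastCases with
  | last => simpa [embTangent] using (eq_neg_of_add_eq_zero_right hu).symm
  | cast i => simp [embTangent]

theorem emb_mem_simplex (ha : 0 < a) {q : Fin (a - 1) → ℝ} (hq : q ∈ stdCorner (a - 1)) :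
    emb a q ∈ simplex a := by
  refine ⟨fun x => ?_, sum_emb ha q⟩
  rw [emb]
  split_ifs with h
  · exact hq.1 _
  · exact sub_nonneg.2 hq.2

theorem continuousOn_comp_emb (ha : 0 < a) {F : Type*} [TopologicalSpace F] {g : (Fin a → ℝ) → F}
    (hg : ContinuousOn g (simplex a)) :
    ContinuousOn (fun q => g (emb a q)) (stdCorner (a - 1)) :=
  hg.comp contDiff_emb.continuous.continuousOn fun _ hq => emb_mem_simplex ha hq

variable {μ : Measure (Fin a → ℝ)} {f : (Fin (a - 1) → ℝ) → ℝ}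

theorem ae_mem_simplex [IsFiniteMeasure μ] (ha : 0 < a) (hf : IsContDensity μ f) :
    ∀ᵐ p ∂μ, p ∈ simplex a := by
  have hmeas : MeasurableSet (simplex a)ᶜ := (isCompact_simplex a).isClosed.measurableSet.compl
  have h := hf.2.2.2 ((simplex a)ᶜ.indicator 1) (measurable_one.indicator hmeas)
    ⟨1, fun p => by by_cases hp : p ∈ (simplex a)ᶜ <;> simp [Set.indicator, hp]⟩
  rw [integral_indicator_one hmeas, setIntegral_eq_zero_of_forall_eq_zero fun q hq => by
    simp [emb_mem_simplex ha hq], measureReal_eq_zero_iff] at h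
  exact h

theorem integral_eq_setIntegral_stdCorner [IsFiniteMeasure μ] (ha : 0 < a)
    (hf : IsContDensity μ f) {g : (Fin a → ℝ) → ℝ} (hg : ContinuousOn g (simplex a)) :
    ∫ p, g p ∂μ = ∫ q in stdCorner (a - 1), g (emb a q) * f q := by
  have hmeas : MeasurableSet (simplex a) := (isCompact_simplex a).isClosed.measurableSet
  obtain ⟨C, hC⟩ := (isCompact_simplex a).exists_bound_of_continuousOn hg
  have hbound p : |(simplex a).indicator g p| ≤ max C 0 := by
    by_cases hp : p ∈ simplex a
    · simpa [hp] using Or.inl (hC p hp)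
    · simp [hp]
  have hmeas_g : Measurable ((simplex a).indicator g) := by
    classical
    rw [← Set.piecewise_eq_indicator]
    exact hg.measurable_piecewise continuousOn_const hmeas
  calc ∫ p, g p ∂μ = ∫ p, (simplex a).indicator g p ∂μ := by
        refine integral_congr_ae ?_
        filter_upwards [ae_mem_simplex ha hf] with p hp
        rw [Set.indicator_of_mem hp]
    _ = ∫ q in stdCorner (a - 1), (simplex a).indicator g (emb a q) * f q :=
        hf.2.2.2 _ hmeas_g ⟨_, hbound⟩
    _ = ∫ q in stdCorner (a - 1), g (emb a q) * f q :=
        setIntegral_congr_fun (isClosed_stdCorner _).measurableSet fun q hq => by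
          simp [emb_mem_simplex ha hq]

end Coordinates

section Continuity

variable {a b : ℕ} {Q : Matrix (Fin b) (Fin a) ℝ}

theorem continuousOn_Dmat (hQpos : ∀ y x, 0 < Q y x) : ContinuousOn (Dmat Q) (simplex a) := by
  refine continuousOn_pi.2 fun i => continuousOn_pi.2 fun j => ?_
  have entry p : Dmat Q p i j = ∑ y, Q y i * ((Q *ᵥ p) y)⁻¹ * Q y j := by
    simp [Dmat, mul_apply, diagonal_apply]
  simp only [entry]
  refine continuousOn_finsetSum _ fun y _ => (continuousOn_const.mul ?_).mul continuousOn_const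
  exact ContinuousOn.inv₀ (by simp only [mulVec, dotProduct]; fun_prop)
    fun p hp => (mulVec_pos_of_mem_simplex hQpos hp y).ne'

theorem continuousOn_asympCov (hQpos : ∀ y x, 0 < Q y x) (hinj : Function.Injective Q.mulVec) :
    ContinuousOn (asympCov Q) (simplex a) := by
  have hD := continuousOn_iff_continuous_domRestrict.1 (continuousOn_Dmat hQpos)
  have hinv : Continuous fun p : simplex a => (Dmat Q p)⁻¹ := by
    simp only [Matrix.inv_def, Ring.inverse_eq_inv']
    exact (hD.matrix_det.inv₀ fun p => (isUnit_det_Dmat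
      (mulVec_pos_of_mem_simplex hQpos p.2) hinj).ne_zero).smul hD.matrix_adjugate
  exact continuousOn_iff_continuous_domRestrict.2
    (hinv.sub continuous_subtype_val.matrix_diagonal)

theorem continuousOn_asympCov_apply (hQpos : ∀ y x, 0 < Q y x)
    (hinj : Function.Injective Q.mulVec) (i j : Fin a) :
    ContinuousOn (fun p => asympCov Q p i j) (simplex a) :=
  continuousOn_pi.1 (continuousOn_pi.1 (continuousOn_asympCov hQpos hinj) i) j

end Continuity

/-! ### The van Trees inequality -/

section CompleteSquare

variable {a b n : ℕ} {Q : Matrix (Fin b) (Fin a) ℝ} {p : Fin a → ℝ}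

theorem sum_asympCov_mulVec (hQcol : ∀ x, ∑ y, Q y x = 1) (hr : ∀ y, (Q *ᵥ p) y ≠ 0)
    (hdet : IsUnit (Dmat Q p).det) (v : Fin a → ℝ) : ∑ x, (asympCov Q p *ᵥ v) x = 0 := by
  rw [← one_dotProduct, dotProduct_mulVec, ← mulVec_transpose, transpose_asympCov,
    asympCov_mulVec_one hQcol hr hdet, zero_dotProduct]

theorem sub_dotProduct_Dmat_mulVec_eq (hdet : IsUnit (Dmat Q p).det) (α : Fin a)
    (u : Fin a → ℝ) :
    p α - (Pi.single α (p α) - u) ⬝ᵥ Dmat Q p *ᵥ (Pi.single α (p α) - u)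
      = asympCov Q p α α - (u + asympCov Q p *ᵥ Pi.single α 1) ⬝ᵥ
          Dmat Q p *ᵥ (u + asympCov Q p *ᵥ Pi.single α 1) + 2 * u α := by
  have square := dotProduct_inv_mulVec_eq_two_mul_sub_add (transpose_Dmat Q p) hdet
    (Pi.single α (p α) - u) (Pi.single α 1)
  have residual : Pi.single α (p α) - u - (Dmat Q p)⁻¹ *ᵥ Pi.single α 1
      = -(u + asympCov Q p *ᵥ Pi.single α 1) := by
    have hdiag : diagonal p *ᵥ Pi.single α 1 = Pi.single α (p α) := by
      rw [diagonal_mulVec_single, mul_one]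
    rw [asympCov, sub_mulVec, hdiag]
    abel
  rw [residual, mulVec_neg, neg_dotProduct_neg] at square
  simp only [mulVec_single_one, single_one_dotProduct, dotProduct_single_one, col_apply,
    Pi.sub_apply, Pi.single_eq_same] at square
  have hentry : asympCov Q p α α = (Dmat Q p)⁻¹ α α - p α := by simp [asympCov]
  rw [hentry, mulVec_single_one]
  linarith

/-- For `p` in the simplex, the expectation of `p_α - Φ(Y)`. -/
def freqBias (Q : Matrix (Fin b) (Fin a) ℝ) (α : Fin a) (Φ : (Fin n → Fin b) → ℝ)
    (p : Fin a → ℝ) : ℝ :=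
  p α - ∑ y, Φ y * lik Q y p

theorem hasFDerivAt_freqBias (Q : Matrix (Fin b) (Fin a) ℝ) (α : Fin a)
    (Φ : (Fin n → Fin b) → ℝ) (p : Fin a → ℝ) :
    HasFDerivAt (freqBias Q α Φ)
      (ContinuousLinearMap.proj α - ∑ y, Φ y • fderiv ℝ (lik Q y) p) p :=
  (hasFDerivAt_apply α p).sub <| HasFDerivAt.fun_sum fun y _ =>
    (hasFDerivAt_lik Q y p).differentiableAt.hasFDerivAt.const_mul (Φ y)

theorem contDiff_freqBias (Q : Matrix (Fin b) (Fin a) ℝ) (α : Fin a)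
    (Φ : (Fin n → Fin b) → ℝ) : ContDiff ℝ 1 (freqBias Q α Φ) := by
  unfold freqBias lik mulVec dotProduct
  fun_prop

theorem le_mul_freqRisk_of_sum_eq_zero (hQpos : ∀ y x, 0 < Q y x) (hQcol : ∀ x, ∑ y, Q y x = 1)
    (hinj : Function.Injective Q.mulVec) (hp : p ∈ simplex a) (hn : n ≠ 0) (α : Fin a)
    {u : Fin a → ℝ} (hu : ∑ x, u x = 0) {ε : ℝ}
    (hε : (u + asympCov Q p *ᵥ Pi.single α 1) ⬝ᵥ
      Dmat Q p *ᵥ (u + asympCov Q p *ᵥ Pi.single α 1) ≤ ε)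
    {h t : ℝ} (ht : h ^ 2 ≤ t) (ρ : ℝ) (Φ : (Fin n → Fin b) → ℝ) :
    h ^ 2 * (asympCov Q p α α - ε) - ρ ^ 2 / n
        + 2 * (h * ρ * freqBias Q α Φ p + h ^ 2 * fderiv ℝ (freqBias Q α Φ) p u)
      ≤ n * (freqRisk Q p α Φ * t) := by
  have hr := mulVec_pos_of_mem_simplex hQpos hp
  have vanTrees := le_mul_freqRisk (fun y x => (hQpos y x).le) hQcol hp (fun y => (hr y).ne') hn
    (α := α) hu h ρ Φ
  rw [sub_dotProduct_Dmat_mulVec_eq (isUnit_det_Dmat hr hinj)] at vanTrees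
  have hfderiv : fderiv ℝ (freqBias Q α Φ) p u = u α - ∑ y, Φ y * fderiv ℝ (lik Q y) p u := by
    simp [(hasFDerivAt_freqBias Q α Φ p).fderiv, _root_.sum_apply]
  have hdensity := mul_le_mul_of_nonneg_left (mul_le_mul_of_nonneg_right ht
    (freqRisk_nonneg (fun y x => (hQpos y x).le) hp.1 α Φ)) (Nat.cast_nonneg (α := ℝ) n)
  have herr := mul_le_mul_of_nonneg_left hε (sq_nonneg h)
  rw [hfderiv, freqBias]
  linarith

end CompleteSquare

section Divergence

variable {ι : Type*} [Fintype ι]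

theorem integral_fderiv_apply_eq_zero {g : (ι → ℝ) → ℝ} (hg : ContDiff ℝ 1 g)
    (hs : HasCompactSupport g) (v : ι → ℝ) : ∫ q, fderiv ℝ g q v = 0 := by
  have hint : Integrable fun q => fderiv ℝ g q v :=
    ((hg.continuous_fderiv one_ne_zero).clm_apply continuous_const).integrable_of_hasCompactSupport
      (hs.fderiv_apply (𝕜 := ℝ) v)
  simpa using integral_mul_fderiv_eq_neg_fderiv_mul_of_integrable (μ := volume)
    (f := fun _ : ι → ℝ => (1 : ℝ)) (g := g) (v := v) (by simp) (by simpa using hint)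
    (by simpa using hg.continuous.integrable_of_hasCompactSupport hs) (by simp)
    fun q _ => hg.differentiable one_ne_zero q

variable [DecidableEq ι]

/-- The divergence of a vector field on `ℝ^ι`. -/
def divergence (F : (ι → ℝ) → ι → ℝ) (q : ι → ℝ) : ℝ :=
  ∑ j, fderiv ℝ F q (Pi.single j 1) j

theorem continuous_divergence {F : (ι → ℝ) → ι → ℝ} (hF : ContDiff ℝ 1 F) :
    Continuous (divergence F) := by
  have := hF.continuous_fderiv one_ne_zero
  unfold divergence
  fun_prop

theorem divergence_smul {g : (ι → ℝ) → ℝ} {F : (ι → ℝ) → ι → ℝ} {q : ι → ℝ}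
    (hg : DifferentiableAt ℝ g q) (hF : DifferentiableAt ℝ F q) :
    divergence (fun q => g q • F q) q = g q * divergence F q + fderiv ℝ g q (F q) := by
  conv_rhs => rw [pi_eq_sum_univ' (F q), map_sum]
  simp [divergence, fderiv_fun_smul hg hF, sum_add_distrib, mul_sum, mul_comm]

theorem integral_divergence_eq_zero {F : (ι → ℝ) → ι → ℝ} (hF : ContDiff ℝ 1 F)
    (hs : HasCompactSupport F) : ∫ q, divergence F q = 0 := by
  have hF' j : ContDiff ℝ 1 fun q => F q j := contDiff_pi.1 hF j
  have hs' j : HasCompactSupport fun q => F q j := hs.comp_left (g := fun v : ι → ℝ => v j) rfl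
  have coord q j : fderiv ℝ F q (Pi.single j 1) j
      = fderiv ℝ (fun q => F q j) q (Pi.single j 1) := by
    rw [(hasFDerivAt_pi'.1 (hF.differentiable one_ne_zero q).hasFDerivAt j).fderiv]
    rfl
  simp only [divergence, coord]
  rw [integral_finsetSum]
  · exact sum_eq_zero fun j _ => integral_fderiv_apply_eq_zero (hF' j) (hs' j) _
  · exact fun j _ => (((hF' j).continuous_fderiv one_ne_zero).clm_apply
      continuous_const).integrable_of_hasCompactSupport ((hs' j).fderiv_apply (𝕜 := ℝ) _)

/-- The function `ρ` for which `h ρ` is the divergence of `h² c`. -/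
def divergenceFactor (h : (ι → ℝ) → ℝ) (c : (ι → ℝ) → ι → ℝ) (q : ι → ℝ) : ℝ :=
  h q * divergence c q + 2 * fderiv ℝ h q (c q)

variable {h : (ι → ℝ) → ℝ} {c : (ι → ℝ) → ι → ℝ} {g : (ι → ℝ) → ℝ}

theorem continuous_divergenceFactor (hh : ContDiff ℝ 1 h) (hc : ContDiff ℝ 1 c) :
    Continuous (divergenceFactor h c) :=
  (hh.continuous.mul (continuous_divergence hc)).add
    (((hh.continuous_fderiv one_ne_zero).clm_apply hc.continuous).const_mul 2)

theorem divergence_smul_sq_smul (hh : ContDiff ℝ 1 h) (hc : ContDiff ℝ 1 c)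
    (hg : ContDiff ℝ 1 g) (q : ι → ℝ) :
    divergence (fun q => g q • h q ^ 2 • c q) q
      = h q * divergenceFactor h c q * g q + h q ^ 2 * fderiv ℝ g q (c q) := by
  have dh := hh.differentiable one_ne_zero q
  have dc := hc.differentiable one_ne_zero q
  rw [divergence_smul (hg.differentiable one_ne_zero q) ((dh.fun_pow 2).fun_smul dc),
    divergence_smul (dh.fun_pow 2) dc, fderiv_fun_pow _ dh, divergenceFactor]
  simp only [Nat.add_one_sub_one, pow_one, nsmul_eq_mul, Nat.cast_ofNat, _root_.smul_apply,
    smul_eq_mul, map_smul]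
  ring

theorem setIntegral_mul_divergenceFactor_add_eq_zero {S : Set (ι → ℝ)} (hS : IsCompact S)
    (hh : ContDiff ℝ 1 h) (hhS : tsupport h ⊆ S) (hc : ContDiff ℝ 1 c) (hg : ContDiff ℝ 1 g) :
    ∫ q in S, (h q * divergenceFactor h c q * g q + h q ^ 2 * fderiv ℝ g q (c q)) = 0 := by
  have hcs : HasCompactSupport h := hS.of_isClosed_subset (isClosed_tsupport h) hhS
  rw [setIntegral_eq_integral_of_forall_compl_eq_zero fun q hq => by
    simp [image_eq_zero_of_notMem_tsupport fun hq' => hq (hhS hq')]]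
  simp only [← divergence_smul_sq_smul hh hc hg]
  refine integral_divergence_eq_zero (hg.smul ((hh.pow 2).smul hc)) ?_
  refine hcs.mono fun q => ?_
  contrapose!
  intro hq
  simp_all

end Divergence

section VanTrees

variable {a b n : ℕ} {Q : Matrix (Fin b) (Fin a) ℝ}

/-- The bias terms add up to a divergence, hence integrate to zero. -/
theorem setIntegral_sub_le_mul_setIntegral_freqRisk (ha : 0 < a) (hQpos : ∀ y x, 0 < Q y x)
    (hQcol : ∀ x, ∑ y, Q y x = 1) (hinj : Function.Injective Q.mulVec)
    {f h : (Fin (a - 1) → ℝ) → ℝ} (hf : ContinuousOn f (stdCorner (a - 1)))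
    (hh : ContDiff ℝ 1 h) (hhS : tsupport h ⊆ stdCorner (a - 1))
    (hle : ∀ q ∈ stdCorner (a - 1), h q ^ 2 ≤ f q)
    {c : (Fin (a - 1) → ℝ) → Fin (a - 1) → ℝ} (hc : ContDiff ℝ 1 c) {α : Fin a} {ε : ℝ}
    (hε : ∀ q ∈ stdCorner (a - 1),
      (embTangent a (c q) + asympCov Q (emb a q) *ᵥ Pi.single α 1) ⬝ᵥ Dmat Q (emb a q) *ᵥ
        (embTangent a (c q) + asympCov Q (emb a q) *ᵥ Pi.single α 1) ≤ ε)
    (hn : n ≠ 0) (Φ : (Fin n → Fin b) → ℝ) :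
    (∫ q in stdCorner (a - 1), h q ^ 2 * (asympCov Q (emb a q) α α - ε))
        - (∫ q in stdCorner (a - 1), divergenceFactor h c q ^ 2) / n
      ≤ n * ∫ q in stdCorner (a - 1), freqRisk Q (emb a q) α Φ * f q := by
  set S := stdCorner (a - 1)
  have hS : IsCompact S := isCompact_stdCorner _
  set g := fun q => freqBias Q α Φ (emb a q)
  have hg : ContDiff ℝ 1 g := (contDiff_freqBias Q α Φ).comp contDiff_emb
  have hfderiv q v : fderiv ℝ g q v = fderiv ℝ (freqBias Q α Φ) (emb a q) (embTangent a v) :=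
    congrArg (· v) (((contDiff_freqBias Q α Φ).differentiable one_ne_zero _).hasFDerivAt.comp q
      (hasFDerivAt_emb q)).fderiv
  have pointwise q (hq : q ∈ S) : h q ^ 2 * (asympCov Q (emb a q) α α - ε)
        - divergenceFactor h c q ^ 2 / n
        + 2 * (h q * divergenceFactor h c q * g q + h q ^ 2 * fderiv ℝ g q (c q))
      ≤ n * (freqRisk Q (emb a q) α Φ * f q) := by
    rw [hfderiv]
    exact le_mul_freqRisk_of_sum_eq_zero hQpos hQcol hinj (emb_mem_simplex ha hq) hn α
      (sum_embTangent ha (c q)) (hε q hq) (hle q hq) (divergenceFactor h c q) Φ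
  have hρ := continuous_divergenceFactor hh hc
  have hV := continuousOn_comp_emb ha (continuousOn_asympCov_apply hQpos hinj α α)
  have iV : IntegrableOn (fun q => h q ^ 2 * (asympCov Q (emb a q) α α - ε)) S :=
    ((hh.continuous.pow 2).continuousOn.mul (hV.sub continuousOn_const)).integrableOn_compact hS
  have iρ : IntegrableOn (fun q => divergenceFactor h c q ^ 2 / n) S :=
    ((hρ.pow 2).div_const _).continuousOn.integrableOn_compact hS
  have hdiv : Continuous fun q =>
      h q * divergenceFactor h c q * g q + h q ^ 2 * fderiv ℝ g q (c q) :=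
    ((hh.continuous.mul hρ).mul hg.continuous).add ((hh.continuous.pow 2).mul
      ((hg.continuous_fderiv one_ne_zero).clm_apply hc.continuous))
  have idiv := (hdiv.const_mul 2).continuousOn.integrableOn_compact (μ := volume) hS
  have irisk : IntegrableOn (fun q => n * (freqRisk Q (emb a q) α Φ * f q)) S :=
    (continuousOn_const.mul ((continuousOn_comp_emb ha
      (continuous_freqRisk Q α Φ).continuousOn).mul hf)).integrableOn_compact hS
  have key := setIntegral_mono_on ((iV.sub iρ).add idiv) irisk hS.measurableSet pointwise
  rwa [integral_add' (iV.sub iρ) idiv, integral_sub' iV iρ, integral_div, integral_const_mul,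
    integral_const_mul, setIntegral_mul_divergenceFactor_add_eq_zero hS hh hhS hc hg,
    mul_zero, add_zero] at key

end VanTrees

/-! ### Smooth approximation -/

section SmoothSelection

variable {E F : Type*} [NormedAddCommGroup E] [NormedSpace ℝ E] [FiniteDimensional ℝ E]
  [NormedAddCommGroup F] [NormedSpace ℝ F]

open scoped Topology Manifold in
theorem exists_contDiff_forall_mem_convex {K : Set E} (hK : IsClosed K) {t : E → Set F}
    (ht : ∀ q ∈ K, Convex ℝ (t q)) (hloc : ∀ q ∈ K, ∃ v, ∀ᶠ x in 𝓝[K] q, v ∈ t x) :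
    ∃ g : E → F, ContDiff ℝ 1 g ∧ ∀ q ∈ K, g q ∈ t q := by
  obtain ⟨g, hg⟩ := exists_contMDiffMap_forall_mem_convex_of_local_const (n := 1) 𝓘(ℝ, E)
    (t := fun q => {v | q ∈ K → v ∈ t q})
    (fun q => by
      by_cases hq : q ∈ K
      · simpa [hq] using ht q hq
      · simpa [hq] using! convex_univ)
    (fun q => by
      by_cases hq : q ∈ K
      · obtain ⟨v, hv⟩ := hloc q hq
        exact ⟨v, eventually_nhdsWithin_iff.1 hv⟩
      · refine ⟨0, ?_⟩
        filter_upwards [hK.isOpen_compl.mem_nhds hq] with x hx hxK using absurd hxK hx)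
  exact ⟨g, g.contMDiff.contDiff, hg⟩

open scoped Topology in
theorem exists_contDiff_sq_le {K S : Set E} (hS : IsClosed S) (hK : IsClosed K)
    (hKS : K ⊆ interior S) {f : E → ℝ} (hf : ContinuousOn f S) (hf0 : ∀ q ∈ S, 0 ≤ f q) {δ : ℝ}
    (hδ : 0 < δ) :
    ∃ h : E → ℝ, ContDiff ℝ 1 h ∧ tsupport h ⊆ S ∧ (∀ q ∈ S, h q ^ 2 ≤ f q) ∧
      ∀ q ∈ K, f q - δ ≤ h q ^ 2 := by
  set w := (interior S).indicator f
  obtain ⟨h, hh, ht⟩ := exists_contDiff_forall_mem_convex isClosed_univ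
    (t := fun q => {z : ℝ | z ∈ Set.Icc 0 √(w q) ∧ (q ∈ K → z ∈ Set.Ici √(f q - δ))})
    (fun q _ => (convex_Icc _ _).inter (by
      by_cases hq : q ∈ K
      · simpa [hq] using! convex_Ici _
      · simpa [hq] using! convex_univ))
    (fun q _ => by
      rw [nhdsWithin_univ]
      by_cases hq : q ∈ interior S
      · refine ⟨√(f q - δ / 2), ?_⟩
        have hfq := hf.continuousAt (mem_interior_iff_mem_nhds.1 hq)
        filter_upwards [isOpen_interior.mem_nhds hq,
          hfq.eventually_const_lt (sub_lt_self _ (half_pos hδ)),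
          hfq.eventually_lt_const (lt_add_of_pos_right _ (half_pos hδ))] with x hx hlow hupp
        have hwx : w x = f x := Set.indicator_of_mem hx f
        rw [hwx]
        exact ⟨⟨Real.sqrt_nonneg _, Real.sqrt_le_sqrt hlow.le⟩,
          fun _ => Real.sqrt_le_sqrt (by linarith)⟩
      · refine ⟨0, ?_⟩
        filter_upwards [hK.isOpen_compl.mem_nhds fun hqK => hq (hKS hqK)] with x hx
        exact ⟨⟨le_rfl, Real.sqrt_nonneg _⟩, fun hxK => absurd hxK hx⟩)
  replace ht q := ht q (Set.mem_univ q)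
  refine ⟨h, hh, closure_minimal (fun q hq => ?_) hS, fun q hq => ?_, fun q hq => ?_⟩
  · refine interior_subset (by_contra fun hq' => hq ?_)
    simpa [w, hq'] using! (ht q).1
  · have hw0 : 0 ≤ w q := Set.indicator_nonneg (fun x hx => hf0 x (interior_subset hx)) q
    have hwf : w q ≤ f q := Set.indicator_apply_le' (fun _ => le_rfl) fun _ => hf0 q hq
    exact ((Real.le_sqrt (ht q).1.1 hw0).1 (ht q).1.2).trans hwf
  · exact (Real.sqrt_le_iff.1 ((ht q).2 hq)).2

variable [MeasurableSpace E] [BorelSpace E] {ν : Measure E} [IsLocallyFiniteMeasure ν]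

theorem exists_isCompact_measureReal_sdiff_le {S : Set E} (hS : IsCompact S)
    (hfr : ν (frontier S) = 0) {r : ℝ} (hr : 0 < r) :
    ∃ K ⊆ interior S, IsCompact K ∧ ν.real (S \ K) ≤ r := by
  obtain ⟨K, hKS, hK, hlt⟩ := isOpen_interior.measurableSet.exists_isCompact_sdiff_lt
    (measure_ne_top_of_subset interior_subset (hS.measure_ne_top (μ := ν)))
    (ENNReal.ofReal_pos.2 hr).ne'
  refine ⟨K, hKS, hK, ENNReal.toReal_le_of_le_ofReal hr.le ?_⟩
  have hcover : S \ K ⊆ frontier S ∪ interior S \ K := fun q hq => by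
    by_cases hqS : q ∈ interior S
    · exact Or.inr ⟨hqS, hq.2⟩
    · exact Or.inl ⟨subset_closure hq.1, hqS⟩
  calc ν (S \ K) ≤ ν (frontier S) + ν (interior S \ K) :=
        (measure_mono hcover).trans (measure_union_le _ _)
    _ ≤ ENNReal.ofReal r := by rw [hfr, zero_add]; exact hlt.le

theorem exists_contDiff_setIntegral_sub_sq_le {S : Set E} (hS : IsCompact S)
    (hfr : ν (frontier S) = 0) {f : E → ℝ} (hf : ContinuousOn f S) (hf0 : ∀ q ∈ S, 0 ≤ f q)
    {ε : ℝ} (hε : 0 < ε) :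
    ∃ h : E → ℝ, ContDiff ℝ 1 h ∧ tsupport h ⊆ S ∧ (∀ q ∈ S, h q ^ 2 ≤ f q) ∧
      ∫ q in S, (f q - h q ^ 2) ∂ν ≤ ε := by
  obtain ⟨M, hM⟩ := hS.exists_bound_of_continuousOn hf
  obtain ⟨K, hKS, hK, hdiff⟩ := exists_isCompact_measureReal_sdiff_le hS hfr
    (by positivity : 0 < ε / (2 * (|M| + 1)))
  set δ := ε / (2 * (ν.real S + 1))
  have hδ : 0 < δ := by positivity
  obtain ⟨h, hh, hhS, hle, hKle⟩ := exists_contDiff_sq_le hS.isClosed hK.isClosed hKS hf hf0 hδ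
  refine ⟨h, hh, hhS, hle, ?_⟩
  have hle_ind q (hq : q ∈ S) : f q - h q ^ 2 ≤ δ + (S \ K).indicator (fun _ => |M|) q := by
    by_cases hqK : q ∈ K
    · simpa [hqK] using! sub_le_comm.1 (hKle q hqK)
    · have hfM : f q ≤ |M| := (le_abs_self _).trans ((hM q hq).trans (le_abs_self M))
      rw [Set.indicator_of_mem (Set.mem_sdiff_of_mem hq hqK)]
      linarith [sq_nonneg (h q)]
  have hmeas : MeasurableSet (S \ K) := hS.measurableSet.diff hK.measurableSet
  have hconst (t : ℝ) : IntegrableOn (fun _ => t) S ν := integrableOn_const hS.measure_ne_top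
  calc ∫ q in S, (f q - h q ^ 2) ∂ν
      ≤ ∫ q in S, (δ + (S \ K).indicator (fun _ => |M|) q) ∂ν :=
        setIntegral_mono_on ((hf.sub (hh.continuous.pow 2).continuousOn).integrableOn_compact hS)
          ((hconst _).add ((hconst _).indicator hmeas)) hS.measurableSet hle_ind
    _ = ν.real S * δ + ν.real (S \ K) * |M| := by
        rw [integral_add (hconst _) ((hconst _).indicator hmeas), setIntegral_indicator hmeas,
          setIntegral_const, setIntegral_const, Set.inter_eq_self_of_subset_right Set.sdiff_subset,
          smul_eq_mul, smul_eq_mul]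
    _ ≤ (ν.real S + 1) * δ + ε / (2 * (|M| + 1)) * (|M| + 1) := by gcongr <;> linarith
    _ = ε := by
        have : ν.real S + 1 ≠ 0 := by positivity
        simp only [δ]
        field_simp
        norm_num

end SmoothSelection

section TestField

variable {a b : ℕ} {Q : Matrix (Fin b) (Fin a) ℝ}

theorem convexOn_dotProduct_mulVec {ι : Type*} [Fintype ι] {M : Matrix ι ι ℝ}
    (hM : M.PosSemidef) : ConvexOn ℝ Set.univ fun w => w ⬝ᵥ M *ᵥ w := by
  refine ⟨convex_univ, fun x _ y _ s t hs ht hst => ?_⟩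
  have hsq := mul_nonneg (mul_nonneg hs ht) (hM.dotProduct_mulVec_nonneg (x - y))
  obtain rfl : t = 1 - s := by linarith
  simp only [star_trivial, mulVec_sub, mulVec_add, mulVec_smul, dotProduct_sub, dotProduct_add,
    sub_dotProduct, add_dotProduct, smul_dotProduct, dotProduct_smul, smul_eq_mul] at hsq ⊢
  linarith

open scoped Topology in
theorem exists_contDiff_forall_dotProduct_Dmat_mulVec_le (ha : 0 < a) (hQpos : ∀ y x, 0 < Q y x)
    (hQcol : ∀ x, ∑ y, Q y x = 1) (hinj : Function.Injective Q.mulVec) (α : Fin a) {ε : ℝ}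
    (hε : 0 < ε) :
    ∃ c : (Fin (a - 1) → ℝ) → Fin (a - 1) → ℝ, ContDiff ℝ 1 c ∧ ∀ q ∈ stdCorner (a - 1),
      (embTangent a (c q) + asympCov Q (emb a q) *ᵥ Pi.single α 1) ⬝ᵥ Dmat Q (emb a q) *ᵥ
        (embTangent a (c q) + asympCov Q (emb a q) *ᵥ Pi.single α 1) ≤ ε := by
  refine exists_contDiff_forall_mem_convex (isClosed_stdCorner _) (t := fun q => {v |
    (embTangent a v + asympCov Q (emb a q) *ᵥ Pi.single α 1) ⬝ᵥ Dmat Q (emb a q) *ᵥ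
      (embTangent a v + asympCov Q (emb a q) *ᵥ Pi.single α 1) ≤ ε}) (fun q hq => ?_)
    fun q hq => ?_
  all_goals have hr := mulVec_pos_of_mem_simplex hQpos (emb_mem_simplex ha hq)
  · have hconv := (convexOn_dotProduct_mulVec (posDef_Dmat hr hinj).posSemidef).convex_le ε
    simpa using! (hconv.translate_preimage_left _).linear_preimage (embTangent a).toLinearMap
  · have hsum : ∑ x, (-(asympCov Q (emb a q) *ᵥ Pi.single α 1)) x = 0 := by
      simp only [Pi.neg_apply, sum_neg_distrib, sum_asympCov_mulVec hQcol (fun y => (hr y).ne')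
        (isUnit_det_Dmat hr hinj), neg_zero]
    obtain ⟨v, hv⟩ := exists_embTangent_eq ha hsum
    have hV := continuousOn_iff_continuous_domRestrict.1
      (continuousOn_comp_emb ha (continuousOn_asympCov hQpos hinj))
    have hD := continuousOn_iff_continuous_domRestrict.1
      (continuousOn_comp_emb ha (continuousOn_Dmat hQpos))
    have herr := (continuous_const (y := embTangent a v)).add
      (hV.matrix_mulVec (continuous_const (y := Pi.single α 1)))
    have hquad : ContinuousOn (fun x =>
        (embTangent a v + asympCov Q (emb a x) *ᵥ Pi.single α 1) ⬝ᵥ Dmat Q (emb a x) *ᵥ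
          (embTangent a v + asympCov Q (emb a x) *ᵥ Pi.single α 1)) (stdCorner (a - 1)) :=
      continuousOn_iff_continuous_domRestrict.2 (herr.dotProduct (hD.matrix_mulVec herr))
    refine ⟨v, ((hquad q hq).eventually_lt_const ?_).mono fun x hx => hx.le⟩
    simpa [hv] using hε

end TestField

/-! ### The asymptotic lower bound -/

section Asymptotics

variable {a b : ℕ} {Q : Matrix (Fin b) (Fin a) ℝ} {μ : Measure (Fin a → ℝ)}
  {f : (Fin (a - 1) → ℝ) → ℝ}

theorem setIntegral_mul_sub_setIntegral_mul_sub_le {E : Type*} [TopologicalSpace E] [T2Space E]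
    [MeasurableSpace E] [OpensMeasurableSpace E] {ν : Measure E} [IsFiniteMeasureOnCompacts ν]
    {S : Set E} (hS : IsCompact S) {v f g : E → ℝ} (hv : ContinuousOn v S)
    (hf : ContinuousOn f S) (hg : ContinuousOn g S) {K ε : ℝ} (hK : ∀ q ∈ S, v q ≤ K)
    (hle : ∀ q ∈ S, g q ≤ f q) (hε : 0 ≤ ε) :
    (∫ q in S, v q * f q ∂ν) - (∫ q in S, g q * (v q - ε) ∂ν)
      ≤ K * (∫ q in S, (f q - g q) ∂ν) + ε * ∫ q in S, f q ∂ν := by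
  have hint {g : E → ℝ} (hg : ContinuousOn g S) : IntegrableOn g S ν :=
    hg.integrableOn_compact hS
  have hvf := hint (hv.mul hf)
  have hgv := hint (hg.mul (hv.sub continuousOn_const) : ContinuousOn (g * (v - fun _ => ε)) S)
  have hfg := (hint (hf.sub hg)).const_mul K
  have hf' := (hint hf).const_mul ε
  have key := setIntegral_mono_on (hvf.sub hgv) (hfg.add hf') hS.measurableSet fun q hq => by
    change v q * f q - g q * (v q - ε) ≤ K * (f q - g q) + ε * f q
    nlinarith [mul_le_mul_of_nonneg_right (hK q hq) (sub_nonneg.2 (hle q hq)),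
      mul_le_mul_of_nonneg_left (hle q hq) hε]
  rwa [integral_sub' hvf hgv, integral_add' hfg hf', integral_const_mul,
    integral_const_mul] at key

theorem exists_sub_le_mul_integral_freqRisk [IsFiniteMeasure μ] (ha : 0 < a)
    (hQpos : ∀ y x, 0 < Q y x) (hQcol : ∀ x, ∑ y, Q y x = 1) (hinj : Function.Injective Q.mulVec)
    (hf : IsContDensity μ f) (α : Fin a) {η : ℝ} (hη : 0 < η) :
    ∃ R : ℝ, ∀ n : ℕ, n ≠ 0 → ∀ Φ : (Fin n → Fin b) → ℝ,
      ∫ p, asympCov Q p α α ∂μ - η - R / n ≤ n * ∫ p, freqRisk Q p α Φ ∂μ := by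
  set S := stdCorner (a - 1)
  have hS : IsCompact S := isCompact_stdCorner _
  have hV := continuousOn_asympCov_apply hQpos hinj α α
  have hVS : ContinuousOn (fun q => asympCov Q (emb a q) α α) S := continuousOn_comp_emb ha hV
  obtain ⟨K, hK⟩ := hS.exists_bound_of_continuousOn hVS
  obtain ⟨h, hh, hhS, hle, hhf⟩ := exists_contDiff_setIntegral_sub_sq_le hS
    ((convex_stdCorner (a - 1)).addHaar_frontier volume) hf.1 (fun q _ => hf.2.1 q)
    (by positivity : 0 < η / (2 * (|K| + 1)))
  obtain ⟨c, hc, hcε⟩ := exists_contDiff_forall_dotProduct_Dmat_mulVec_le ha hQpos hQcol hinj α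
    (half_pos hη)
  refine ⟨∫ q in S, divergenceFactor h c q ^ 2, fun n hn Φ => ?_⟩
  have hvanTrees := setIntegral_sub_le_mul_setIntegral_freqRisk ha hQpos hQcol hinj hf.1 hh hhS
    hle hc hcε hn Φ
  have hloss := calc
    (∫ q in S, asympCov Q (emb a q) α α * f q)
        - (∫ q in S, h q ^ 2 * (asympCov Q (emb a q) α α - η / 2))
      ≤ |K| * (∫ q in S, (f q - h q ^ 2)) + η / 2 * ∫ q in S, f q :=
        setIntegral_mul_sub_setIntegral_mul_sub_le hS hVS hf.1
          (hh.continuous.pow 2).continuousOn (fun q hq => (le_abs_self _).trans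
            ((hK q hq).trans (le_abs_self K))) hle (half_pos hη).le
    _ ≤ |K| * (η / (2 * (|K| + 1))) + η / 2 * 1 := by
        rw [hf.2.2.1]
        gcongr
    _ ≤ (|K| + 1) * (η / (2 * (|K| + 1))) + η / 2 * 1 := by gcongr; linarith
    _ = η := by field_simp; norm_num
  rw [integral_eq_setIntegral_stdCorner ha hf hV,
    integral_eq_setIntegral_stdCorner ha hf (continuous_freqRisk Q α Φ).continuousOn]
  linarith

theorem le_liminf_of_forall_exists_sub_sub_div_le {u : ℕ → ℝ} {L C : ℝ}
    (hC : ∀ n, n ≠ 0 → u n ≤ C)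
    (hL : ∀ η > 0, ∃ R : ℝ, ∀ n : ℕ, n ≠ 0 → L - η - R / n ≤ u n) : L ≤ liminf u atTop := by
  -- in `ℝ`, `liminf` is meaningful only for sequences that do not tend to infinity
  have hcob : IsCoboundedUnder (· ≥ ·) atTop u :=
    IsBoundedUnder.isCoboundedUnder_ge
      ⟨C, eventually_map.2 ((eventually_ne_atTop 0).mono fun n hn => hC n hn)⟩
  refine le_of_forall_pos_sub_le fun η hη => le_liminf_of_le hcob ?_
  obtain ⟨R, hR⟩ := hL (η / 2) (half_pos hη)
  filter_upwards [eventually_ne_atTop 0,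
    (tendsto_const_div_atTop_nhds_zero_nat R).eventually_lt_const (half_pos hη)] with n hn hsmall
  linarith [hR n hn]

theorem integrable_trace_asympCov [IsFiniteMeasure μ] (hQpos : ∀ y x, 0 < Q y x)
    (hinj : Function.Injective Q.mulVec) (hμ : ∀ᵐ p ∂μ, p ∈ simplex a) :
    Integrable (fun p => (asympCov Q p).trace) μ :=
  integrable_finsetSum _ fun α _ =>
    integrable_of_continuousOn_simplex hμ (continuousOn_asympCov_apply hQpos hinj α α)

theorem integral_trace_asympCov_le_liminf [IsFiniteMeasure μ] (ha : 0 < a)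
    (hQpos : ∀ y x, 0 < Q y x) (hQcol : ∀ x, ∑ y, Q y x = 1) (hinj : Function.Injective Q.mulVec)
    (hf : IsContDensity μ f) :
    ∫ p, (asympCov Q p).trace ∂μ
      ≤ liminf (fun n : ℕ => (n : ℝ) * MSEfreq (n := n) Q μ (PhiOpt Q μ)) atTop := by
  have hμ := ae_mem_simplex ha hf
  obtain ⟨C, hC⟩ := exists_mul_MSEfreq_PhiOpt_le (fun y x => (hQpos y x).le) hQcol hinj hμ
  refine le_liminf_of_forall_exists_sub_sub_div_le hC fun η hη => ?_
  have haR : (0 : ℝ) < a := Nat.cast_pos.2 ha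
  choose R hR using fun α =>
    exists_sub_le_mul_integral_freqRisk ha hQpos hQcol hinj hf α (div_pos hη haR)
  refine ⟨∑ α, R α, fun n hn => ?_⟩
  calc ∫ p, (asympCov Q p).trace ∂μ - η - (∑ α, R α) / n
      = ∑ α, (∫ p, asympCov Q p α α ∂μ - η / a - R α / n) := by
        simp only [trace, diag_apply]
        rw [integral_finsetSum _ fun α _ =>
          integrable_of_continuousOn_simplex hμ (continuousOn_asympCov_apply hQpos hinj α α),
          sum_sub_distrib, sum_sub_distrib, sum_const, card_univ, Fintype.card_fin,
          nsmul_eq_mul, mul_div_cancel₀ _ haR.ne', sum_div]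
    _ ≤ ∑ α, n * ∫ p, freqRisk Q p α (fun y : Fin n → Fin b => PhiOpt Q μ y α) ∂μ :=
        sum_le_sum fun α _ => hR α n hn _
    _ = n * MSEfreq (n := n) Q μ (PhiOpt Q μ) := by
        rw [MSEfreq_eq_sum_integral_freqRisk hμ, mul_sum]

theorem exp_integral_le_integral_of_ae_exp_le {Ω : Type*} [MeasurableSpace Ω] {ν : Measure Ω}
    [IsProbabilityMeasure ν] {ψ g : Ω → ℝ} (hψ : Integrable ψ ν) (hg : Integrable g ν)
    (hle : ∀ᵐ x ∂ν, exp (ψ x) ≤ g x) : exp (∫ x, ψ x ∂ν) ≤ ∫ x, g x ∂ν := by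
  have hexp : Integrable (fun x => exp (ψ x)) ν :=
    hg.mono' (continuous_exp.comp_aestronglyMeasurable hψ.1)
      (hle.mono fun x hx => by rwa [norm_of_nonneg (exp_pos _).le])
  exact (convexOn_exp.map_integral_le continuous_exp.continuousOn isClosed_univ
    (ae_of_all _ fun _ => Set.mem_univ _) hψ hexp).trans (integral_mono_ae hexp hg hle)

theorem card_mul_exp_integral_le_integral_trace_asympCov [IsProbabilityMeasure μ] (ha : 2 ≤ a)
    (hQpos : ∀ y x, 0 < Q y x) (hQcol : ∀ x, ∑ y, Q y x = 1) (hrank : Q.rank = a)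
    (hμ : ∀ᵐ p ∂μ, p ∈ simplex a) (hD : Integrable (fun p => log (Dmat Q p).det) μ)
    (hG : Integrable (fun p => log (Gmat Q p).det - ∑ y, log ((Q *ᵥ p) y)) μ) :
    a * exp (((∫ p, (log (Gmat Q p).det - ∑ y, log ((Q *ᵥ p) y)) ∂μ)
      - ∫ p, log (Dmat Q p).det ∂μ) / ((a : ℝ) - 1)) ≤ ∫ p, (asympCov Q p).trace ∂μ := by
  have haR : (0 : ℝ) < a := by positivity
  have hV := integrable_trace_asympCov hQpos (mulVec_injective_of_rank_eq hrank) hμ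
  have jensen := exp_integral_le_integral_of_ae_exp_le ((hG.sub hD).div_const ((a : ℝ) - 1))
    (hV.div_const a) (hμ.mono fun p hp => (le_div_iff₀' haR).2
      (card_mul_exp_le_trace_asympCov ha hQpos hQcol hrank hp))
  rwa [integral_div, integral_div, integral_sub' hG hD, le_div_iff₀' haR] at jensen

theorem exp_two_div_mul_deltaMu (ha : 2 ≤ a) (Q : Matrix (Fin b) (Fin a) ℝ)
    (μ : Measure (Fin a → ℝ)) :
    exp (2 / ((a : ℝ) - 1) * deltaMu Q μ) = 2 * π * exp 1 *
      exp (((∫ p, (log (Gmat Q p).det - ∑ y, log ((Q *ᵥ p) y)) ∂μ)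
        - ∫ p, log (Dmat Q p).det ∂μ) / ((a : ℝ) - 1)) := by
  have ha' : (a : ℝ) - 1 ≠ 0 := (sub_pos.2 (Nat.one_lt_cast.2 ha)).ne'
  rw [← exp_log (by positivity : 0 < 2 * π * exp 1), ← exp_add, deltaMu, gammaMu]
  congr 1
  field_simp
  ring

end Asymptotics

/-- asymptotic lower bound on `n · MSE^freq` in terms of
`δ_μ(Q)`. -/
theorem liminf_MSEfreq_ge_delta_bound {a b : ℕ} (ha : 2 ≤ a) (hb : 2 ≤ b)
    (Q : Matrix (Fin b) (Fin a) ℝ)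
    (hQpos : ∀ y x, 0 < Q y x) (hQcol : ∀ x, ∑ y, Q y x = 1)
    (μ : Measure (Fin a → ℝ)) [IsProbabilityMeasure μ]
    (hrank : Q.rank = a)
    (f : (Fin (a - 1) → ℝ) → ℝ) (hf : IsContDensity μ f)
    (hint : Integrable (fun p => Real.log (Dmat Q p).det) μ)
    (hint2 : Integrable
      (fun p => Real.log (Gmat Q p).det - ∑ y, Real.log (Q.mulVec p y)) μ) :
    (a : ℝ) / (2 * π * Real.exp 1) * Real.exp ((2 / ((a : ℝ) - 1)) * deltaMu Q μ) ≤
      Filter.liminf (fun n : ℕ => (n : ℝ) * MSEfreq (n := n) Q μ (PhiOpt Q μ))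
        Filter.atTop := by
  have hpos : 0 < 2 * π * exp 1 := by positivity
  calc (a : ℝ) / (2 * π * exp 1) * exp (2 / ((a : ℝ) - 1) * deltaMu Q μ)
      = a * exp (((∫ p, (log (Gmat Q p).det - ∑ y, log ((Q *ᵥ p) y)) ∂μ)
          - ∫ p, log (Dmat Q p).det ∂μ) / ((a : ℝ) - 1)) := by
        rw [exp_two_div_mul_deltaMu ha, ← mul_assoc, div_mul_cancel₀ _ hpos.ne']
    _ ≤ ∫ p, (asympCov Q p).trace ∂μ :=
        card_mul_exp_integral_le_integral_trace_asympCov ha hQpos hQcol hrank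
          (ae_mem_simplex (by omega) hf) hint hint2
    _ ≤ liminf (fun n : ℕ => (n : ℝ) * MSEfreq (n := n) Q μ (PhiOpt Q μ)) atTop :=
        integral_trace_asympCov_le_liminf (by omega) hQpos hQcol
          (mulVec_injective_of_rank_eq hrank) hf

end
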